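/- arXiv:1102.5380 — 3 statements merged into one kernel-verified Lean document; each statement's English description precedes it below -/
import Mathlib

section
/- (Kuijlaars–Serra Capizzano) Let (J(a^k,b^k))_k be a sequence of Jacobi matrices with |a_j^k| ≤ 1 and 0 < b_j^k ≤ 1 for all j ≤ k, and suppose there exist bounded measurable functions a, b : [0,1] → [0,1] such that for every ε > 0, the Lebesgue measure of {s ∈ [0,1] : |a_{⌈sk⌉}^k − a(s)| ≥ ε} tends to 0 as k → ∞, and likewise the Lebesgue measure of {s ∈ [0,1] : |b_{⌈sk⌉}^k − b(s)| ≥ ε} tends to 0 as k → ∞. Then for every continuous function φ on [−3,3], lim_{k→∞} (1/k)·Trace[φ(J(a^k,b^k))] = (1/π) ∫_0^1 ∫_0^π φ(a(x) + 2b(x)·cos y) dy dx. -/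
open Filter MeasureTheory

noncomputable section

/-- The `k × k` Jacobi (real symmetric tridiagonal) matrix with diagonal entries
`a 0, …, a (k-1)` and sub/super-diagonal entries `b 0, …, b (k-2)` (0-indexed). -/
def jacobiMatrix (k : ℕ) (a b : ℕ → ℝ) : Matrix (Fin k) (Fin k) ℝ :=
  Matrix.of fun i j =>
    if (i : ℕ) = (j : ℕ) then a i
    else if (i : ℕ) + 1 = (j : ℕ) then b i
    else if (j : ℕ) + 1 = (i : ℕ) then b j
    else 0

theorem jacobiMatrix_isHermitian (k : ℕ) (a b : ℕ → ℝ) :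
    (jacobiMatrix k a b).IsHermitian := by
  show _ = _
  ext i j
  simp only [Matrix.conjTranspose_apply, jacobiMatrix, Matrix.of_apply, star_trivial]
  by_cases h1 : (i : ℕ) = (j : ℕ)
  · have h : i = j := Fin.ext h1
    subst h
    rfl
  · have h1' : ¬ (j : ℕ) = (i : ℕ) := fun h => h1 h.symm
    by_cases h2 : (i : ℕ) + 1 = (j : ℕ)
    · have h3 : ¬ (j : ℕ) + 1 = (i : ℕ) := by omega
      simp [h1, h1', h2, h3]
    · by_cases h3 : (j : ℕ) + 1 = (i : ℕ) <;> simp [h1, h1', h2, h3]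

/-- `Trace[φ(J(a,b))] = ∑ⱼ φ(λⱼ)`, the sum of `φ` over the eigenvalues of the Jacobi matrix. -/
def jacobiTrace (k : ℕ) (a b : ℕ → ℝ) (φ : ℝ → ℝ) : ℝ :=
  ∑ i, φ ((jacobiMatrix_isHermitian k a b).eigenvalues i)

/-- The class `𝒮`: small deviations `∑ᵢ |a_{i+1}^k − a_i^k| = o(k)` and entries in `[0,1]`. -/
def MemS (a : ℕ → ℕ → ℝ) : Prop :=
  ((fun k : ℕ => ∑ i ∈ Finset.range (k - 1), |a k (i + 1) - a k i|)
      =o[Filter.atTop] fun k : ℕ => (k : ℝ)) ∧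
  ∀ k : ℕ, ∀ i < k, a k i ∈ Set.Icc (0 : ℝ) 1

/-- The class `𝒮′`: for every `δ ∈ (0,1)`, `∑ᵢ |a_{i+1}^k − a_i^k| = O(k^{1−δ})`, and
`maxᵢ |a_i^k| = O(log k)`. -/
def MemS' (a : ℕ → ℕ → ℝ) : Prop :=
  (∀ δ : ℝ, δ ∈ Set.Ioo (0 : ℝ) 1 →
    ((fun k : ℕ => ∑ i ∈ Finset.range (k - 1), |a k (i + 1) - a k i|)
        =O[Filter.atTop] fun k : ℕ => (k : ℝ) ^ (1 - δ))) ∧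
  ∃ C : ℝ, ∀ᶠ k : ℕ in Filter.atTop, ∀ i < k, |a k i| ≤ C * Real.log k

/-- `μ`-distributed on `I² = [0,1]²`. -/
def MuDistributedI (a b : ℕ → ℕ → ℝ) (μ : Measure (ℝ × ℝ)) : Prop :=
  ∀ ψ : ℝ × ℝ → ℝ, ContinuousOn ψ (Set.Icc (0 : ℝ) 1 ×ˢ Set.Icc (0 : ℝ) 1) →
    Filter.Tendsto (fun k : ℕ => (1 / (k : ℝ)) * ∑ j ∈ Finset.range k, ψ (a k j, b k j))
      Filter.atTop (nhds (∫ p, ψ p ∂μ))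

/-- `μ`-distributed on `ℝ²` (test functions: bounded continuous). -/
def MuDistributedR (a b : ℕ → ℕ → ℝ) (μ : Measure (ℝ × ℝ)) : Prop :=
  ∀ ψ : ℝ × ℝ → ℝ, Continuous ψ → (∃ C : ℝ, ∀ p, |ψ p| ≤ C) →
    Filter.Tendsto (fun k : ℕ => (1 / (k : ℝ)) * ∑ j ∈ Finset.range k, ψ (a k j, b k j))
      Filter.atTop (nhds (∫ p, ψ p ∂μ))

/-- Tightness via closed bounded rectangles. -/
def TightRect (μ : Measure (ℝ × ℝ)) : Prop :=
  ∀ ε : ℝ, 0 < ε → ∃ x₁ x₂ y₁ y₂ : ℝ,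
    μ ((Set.Icc x₁ x₂ ×ˢ Set.Icc y₁ y₂)ᶜ) < ENNReal.ofReal ε

/-- Almost everywhere increasing sequence of vectors. -/
def AEIncreasing (a : ℕ → ℕ → ℝ) : Prop :=
  Filter.Tendsto
    (fun k : ℕ => (((Finset.range (k - 1)).filter fun i => a k i ≤ a k (i + 1)).card : ℝ) / k)
    Filter.atTop (nhds 1)

/-- Almost everywhere decreasing sequence of vectors. -/
def AEDecreasing (a : ℕ → ℕ → ℝ) : Prop :=
  Filter.Tendsto
    (fun k : ℕ => (((Finset.range (k - 1)).filter fun i => a k (i + 1) ≤ a k i).card : ℝ) / k)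
    Filter.atTop (nhds 1)

/-- Almost everywhere monotone sequence of vectors. -/
def AEMonotone (a : ℕ → ℕ → ℝ) : Prop :=
  AEIncreasing a ∨ AEDecreasing a


namespace KSC

def zA (k : ℕ) (a : ℕ → ℝ) (i : ℤ) : ℝ := if 0 ≤ i ∧ i < k then a i.toNat else 0

def zB (k : ℕ) (b : ℕ → ℝ) (i : ℤ) : ℝ := if 0 ≤ i ∧ i + 1 < k then b i.toNat else 0

def R (α β : ℤ → ℝ) : ℕ → ℤ → ℤ → ℝ
  | 0, i, j => if i = j then 1 else 0
  | m + 1, i, j => β (i - 1) * R α β m (i - 1) j + α i * R α β m i j + β i * R α β m (i + 1) j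

lemma zA_abs (k : ℕ) (a : ℕ → ℝ) (h : ∀ j < k, |a j| ≤ 1) (i : ℤ) : |zA k a i| ≤ 1 := by
  unfold zA
  split_ifs with hi
  · exact h _ (by omega)
  · simp

lemma zB_abs (k : ℕ) (a : ℕ → ℝ) (h : ∀ j < k, |a j| ≤ 1) (i : ℤ) : |zB k a i| ≤ 1 := by
  unfold zB
  split_ifs with hi
  · exact h _ (by omega)
  · simp

lemma row (k : ℕ) (a b : ℕ → ℝ) (i : Fin k) (f : ℤ → ℝ) :
    ∑ l : Fin k, jacobiMatrix k a b i l * f ((l : ℕ) : ℤ) =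
      zB k b ((i : ℕ) - 1) * f ((i : ℕ) - 1) + zA k a (i : ℕ) * f (i : ℕ)
        + zB k b (i : ℕ) * f ((i : ℕ) + 1) := by
  obtain ⟨i, hi⟩ := i
  have h1 : ∑ l : Fin k, jacobiMatrix k a b ⟨i, hi⟩ l * f ((l : ℕ) : ℤ) =
      ∑ l ∈ Finset.range k, ((if l = i then a i * f i else 0) + (if l = i + 1 then b i * f (i + 1) else 0)
        + (if l + 1 = i then b l * f l else 0)) := by
    rw [← Fin.sum_univ_eq_sum_range (fun l => ((if l = i then a i * f i else 0) + (if l = i + 1 then b i * f (i + 1) else 0)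
        + (if l + 1 = i then b l * f l else 0))) k]
    refine Finset.sum_congr rfl fun l _ => ?_
    obtain ⟨l, hl⟩ := l
    simp only [jacobiMatrix, Matrix.of_apply]
    by_cases e1 : i = l
    · subst e1; simp
    · by_cases e2 : i + 1 = l
      · subst e2; simp
        intro h; omega
      · by_cases e3 : l + 1 = i
        · subst e3; simp
          rw [if_neg (by omega), if_neg (by omega), zero_add]
        · simp [e1, e2, e3, Ne.symm e1, Ne.symm e2]
  rw [h1, Finset.sum_add_distrib, Finset.sum_add_distrib, Finset.sum_ite_eq', Finset.sum_ite_eq']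
  have h3 : ∑ l ∈ Finset.range k, (if l + 1 = i then b l * f l else 0) =
      zB k b ((i : ℤ) - 1) * f ((i : ℤ) - 1) := by
    cases i with
    | zero => simp [zB]
    | succ n =>
      simp only [add_left_inj, Finset.sum_ite_eq', Finset.mem_range]
      have : n < k := by omega
      simp [zB, this]
      intro h; omega
  rw [h3]
  have h4 : zA k a (i : ℤ) = a i := by simp [zA, hi]
  simp only [Finset.mem_range, hi, if_true, h4]
  have h5 : zB k b (i : ℤ) * f (i + 1) = if i + 1 < k then b i * f (i + 1) else 0 := by
    unfold zB
    by_cases h : i + 1 < k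
    · have : (i : ℤ) + 1 < k := by omega
      simp [h, this]
    · have : ¬ (i : ℤ) + 1 < k := by omega
      simp [h, this]
  rw [h5]; ring

lemma pow_entry (k : ℕ) (a b : ℕ → ℝ) (m : ℕ) (i j : Fin k) :
    (jacobiMatrix k a b ^ m) i j = R (zA k a) (zB k b) m (i : ℕ) (j : ℕ) := by
  induction m generalizing i with
  | zero => simp [R, Matrix.one_apply, Fin.ext_iff]
  | succ m ih =>
    rw [pow_succ', Matrix.mul_apply]
    simp_rw [ih]
    rw [row k a b i (fun l => R (zA k a) (zB k b) m l (j : ℕ))]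
    simp [R]

lemma trace_pow (k : ℕ) (a b : ℕ → ℝ) (m : ℕ) :
    ∑ i, (jacobiMatrix_isHermitian k a b).eigenvalues i ^ m =
      ∑ j ∈ Finset.range k, R (zA k a) (zB k b) m j j := by
  rw [← Fin.sum_univ_eq_sum_range (fun j => R (zA k a) (zB k b) m j j) k]
  have h : (jacobiMatrix k a b ^ m).trace = ∑ j : Fin k, R (zA k a) (zB k b) m (j : ℕ) (j : ℕ) := by
    simp [Matrix.trace, pow_entry]
  rw [← h]
  conv_rhs => rw [(jacobiMatrix_isHermitian k a b).spectral_theorem]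
  rw [← map_pow, Unitary.conjStarAlgAut_apply, Matrix.trace_mul_cycle]
  simp [Matrix.diagonal_pow, Matrix.trace_diagonal]

lemma eig_mem (k : ℕ) (a b : ℕ → ℝ) (ha : ∀ j < k, |a j| ≤ 1) (hb : ∀ j < k, |b j| ≤ 1)
    (i : Fin k) : (jacobiMatrix_isHermitian k a b).eigenvalues i ∈ Set.Icc (-3 : ℝ) 3 := by
  set hJ := jacobiMatrix_isHermitian k a b
  have he : Module.End.HasEigenvalue (Matrix.toLin' (jacobiMatrix k a b)) (hJ.eigenvalues i) := by
    rw [Module.End.hasEigenvalue_iff_mem_spectrum, Matrix.spectrum_toLin']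
    exact hJ.eigenvalues_mem_spectrum_real i
  obtain ⟨l, hl⟩ := eigenvalue_mem_ball he
  rw [Metric.mem_closedBall, Real.dist_eq] at hl
  have hs : ∑ j, |jacobiMatrix k a b l j| = |jacobiMatrix k a b l l| +
      ∑ j ∈ Finset.univ.erase l, ‖jacobiMatrix k a b l j‖ := by
    rw [← Finset.add_sum_erase _ _ (Finset.mem_univ l)]; rfl
  have hr := row k (fun n => |a n|) (fun n => |b n|) l (fun _ => 1)
  have hab : ∀ j, |jacobiMatrix k a b l j| =
      jacobiMatrix k (fun n => |a n|) (fun n => |b n|) l j * 1 := by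
    intro j
    simp only [jacobiMatrix, Matrix.of_apply]
    split_ifs <;> simp
  simp_rw [← hab] at hr
  have e1 := zA_abs k (fun n => |a n|) (by simpa using ha) (l : ℕ)
  have e2 := zB_abs k (fun n => |b n|) (by simpa using hb) (l : ℕ)
  have e3 := zB_abs k (fun n => |b n|) (by simpa using hb) ((l : ℕ) - 1)
  rw [abs_le] at e1 e2 e3 hl
  have e4 := le_abs_self (jacobiMatrix k a b l l)
  have e5 := neg_abs_le (jacobiMatrix k a b l l)
  constructor <;> linarith

def Q (m : ℕ) (x y : ℝ) (d : ℤ) : ℝ :=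
  (1 / Real.pi) * ∫ θ in (0 : ℝ)..Real.pi, (x + 2 * y * Real.cos θ) ^ m * Real.cos (d * θ)

lemma Q_zero (x y : ℝ) (d : ℤ) : Q 0 x y d = if d = 0 then 1 else 0 := by
  unfold Q
  split_ifs with h
  · subst h; simp [Real.pi_ne_zero]
  · have hd : (d : ℝ) ≠ 0 := by exact_mod_cast h
    simp [intervalIntegral.integral_comp_mul_left (fun t => Real.cos t) hd]

lemma Q_succ (m : ℕ) (x y : ℝ) (d : ℤ) :
    Q (m + 1) x y d = y * Q m x y (d - 1) + x * Q m x y d + y * Q m x y (d + 1) := by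
  unfold Q
  have hi : ∀ (e : ℤ), IntervalIntegrable
      (fun θ => (x + 2 * y * Real.cos θ) ^ m * Real.cos (e * θ)) volume 0 Real.pi := by
    intro e
    apply Continuous.intervalIntegrable
    fun_prop
  have : ∫ θ in (0 : ℝ)..Real.pi, (x + 2 * y * Real.cos θ) ^ (m + 1) * Real.cos (d * θ) =
      ∫ θ in (0 : ℝ)..Real.pi, (y * ((x + 2 * y * Real.cos θ) ^ m * Real.cos ((d - 1 : ℤ) * θ)) +
        x * ((x + 2 * y * Real.cos θ) ^ m * Real.cos (d * θ)) +
        y * ((x + 2 * y * Real.cos θ) ^ m * Real.cos ((d + 1 : ℤ) * θ))) := by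
    congr 1; ext θ
    push_cast
    have e1 : ((d : ℝ) - 1) * θ = d * θ - θ := by ring
    have e2 : ((d : ℝ) + 1) * θ = d * θ + θ := by ring
    rw [e1, e2, Real.cos_add, Real.cos_sub]; ring
  rw [this, intervalIntegral.integral_add (((hi _).const_mul _).add ((hi _).const_mul _))
    ((hi _).const_mul _), intervalIntegral.integral_add ((hi _).const_mul _) ((hi _).const_mul _)]
  simp only [intervalIntegral.integral_const_mul]
  ring

lemma abs_mul_le_of {u v c : ℝ} (hu : |u| ≤ 1) (hv : |v| ≤ c) : |u * v| ≤ c := by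
  rw [abs_mul]
  nlinarith [abs_nonneg u, abs_nonneg v]

lemma Q_abs (m : ℕ) (x y : ℝ) (hx : |x| ≤ 1) (hy : |y| ≤ 1) (d : ℤ) : |Q m x y d| ≤ 3 ^ m := by
  induction m generalizing d with
  | zero => rw [Q_zero]; split_ifs <;> simp
  | succ m ih =>
    rw [Q_succ]
    have h1 := abs_mul_le_of hy (ih (d - 1))
    have h2 := abs_mul_le_of hx (ih d)
    have h3 := abs_mul_le_of hy (ih (d + 1))
    rw [pow_succ]
    rw [abs_le] at *
    constructor <;> linarith

lemma mul_sub_mul_bound {u u' v v' c : ℝ} (hu : |u| ≤ 1) (hv' : |v'| ≤ c) :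
    |u * v - u' * v'| ≤ |v - v'| + c * |u - u'| := by
  have : u * v - u' * v' = u * (v - v') + (u - u') * v' := by ring
  rw [this]
  refine (abs_add_le _ _).trans ?_
  rw [abs_mul, abs_mul]
  nlinarith [abs_nonneg u, abs_nonneg v', abs_nonneg (v - v'), abs_nonneg (u - u')]

lemma Q_lip (m : ℕ) : ∃ C : ℝ, 0 ≤ C ∧ ∀ (x y x' y' : ℝ), |x| ≤ 1 → |y| ≤ 1 → |x'| ≤ 1 → |y'| ≤ 1 →
    ∀ d, |Q m x y d - Q m x' y' d| ≤ C * (|x - x'| + |y - y'|) := by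
  induction m with
  | zero => exact ⟨0, le_rfl, fun x y x' y' _ _ _ _ d => by simp [Q_zero]⟩
  | succ m ih =>
    obtain ⟨C, hC, h⟩ := ih
    refine ⟨3 * C + 2 * 3 ^ m, by positivity, fun x y x' y' hx hy hx' hy' d => ?_⟩
    rw [Q_succ, Q_succ]
    have h1 := mul_sub_mul_bound (u' := y') (v := Q m x y (d - 1)) hy (Q_abs m x' y' hx' hy' (d - 1))
    have h2 := mul_sub_mul_bound (u' := x') (v := Q m x y d) hx (Q_abs m x' y' hx' hy' d)
    have h3 := mul_sub_mul_bound (u' := y') (v := Q m x y (d + 1)) hy (Q_abs m x' y' hx' hy' (d + 1))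
    have g1 := h x y x' y' hx hy hx' hy' (d - 1)
    have g2 := h x y x' y' hx hy hx' hy' d
    have g3 := h x y x' y' hx hy hx' hy' (d + 1)
    have hp : 0 ≤ (3 : ℝ) ^ m * |x - x'| := by positivity
    have hc : (3 * C + 2 * 3 ^ m) * (|x - x'| + |y - y'|) = 3 * (C * (|x - x'| + |y - y'|)) +
      2 * (3 ^ m * |x - x'|) + 2 * (3 ^ m * |y - y'|) := by ring
    rw [hc]
    have t := abs_add_three (y * Q m x y (d - 1) - y' * Q m x' y' (d - 1))
      (x * Q m x y d - x' * Q m x' y' d) (y * Q m x y (d + 1) - y' * Q m x' y' (d + 1))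
    refine le_trans (le_of_eq ?_) (t.trans ?_)
    · congr 1; ring
    · linarith

/-- local comparison of the walk sums with the constant coefficient ones -/
lemma main_compare (α β : ℕ → ℤ → ℝ) (hα : ∀ k i, |α k i| ≤ 1) (hβ : ∀ k i, |β k i| ≤ 1)
    (vα : ∀ d : ℤ, Tendsto (fun k : ℕ => (1 / (k : ℝ)) *
      ∑ j ∈ Finset.range k, |α k (j + d) - α k j|) atTop (nhds 0))
    (vβ : ∀ d : ℤ, Tendsto (fun k : ℕ => (1 / (k : ℝ)) *
      ∑ j ∈ Finset.range k, |β k (j + d) - β k j|) atTop (nhds 0)) (m : ℕ) (d : ℤ) :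
    Tendsto (fun k : ℕ => (1 / (k : ℝ)) *
      ∑ j ∈ Finset.range k, |R (α k) (β k) m (j + d) j - Q m (α k j) (β k j) d|) atTop (nhds 0) := by
  induction m generalizing d with
  | zero => simp [R, Q_zero]
  | succ m ih =>
    have hlim := (((ih (d - 1)).add (ih d)).add (ih (d + 1))).add
      ((((vβ (d - 1)).add (vα d)).add (vβ d)).const_mul (3 ^ m))
    simp only [add_zero, mul_zero] at hlim
    refine squeeze_zero (fun k => by positivity) (fun k => ?_) hlim
    rw [← mul_add, ← mul_add, ← mul_add, ← mul_add, mul_left_comm, ← mul_add]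
    refine mul_le_mul_of_nonneg_left ?_ (by positivity)
    rw [← Finset.sum_add_distrib, ← Finset.sum_add_distrib, ← Finset.sum_add_distrib,
      ← Finset.sum_add_distrib, Finset.mul_sum, ← Finset.sum_add_distrib]
    refine Finset.sum_le_sum fun j _ => ?_
    rw [Q_succ, R]
    have h1 := mul_sub_mul_bound (u' := β k j) (v := R (α k) (β k) m (j + d - 1) j)
      (hβ k (j + d - 1)) (Q_abs m _ _ (hα k j) (hβ k j) (d - 1))
    have h2 := mul_sub_mul_bound (u' := α k j) (v := R (α k) (β k) m (j + d) j)
      (hα k (j + d)) (Q_abs m _ _ (hα k j) (hβ k j) d)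
    have h3 := mul_sub_mul_bound (u' := β k j) (v := R (α k) (β k) m (j + d + 1) j)
      (hβ k (j + d)) (Q_abs m _ _ (hα k j) (hβ k j) (d + 1))
    rw [← add_sub_assoc, ← add_assoc]
    have t := abs_add_three (β k (j + d - 1) * R (α k) (β k) m (j + d - 1) j -
        β k j * Q m (α k j) (β k j) (d - 1))
      (α k (j + d) * R (α k) (β k) m (j + d) j - α k j * Q m (α k j) (β k j) d)
      (β k (j + d) * R (α k) (β k) m (j + d + 1) j - β k j * Q m (α k j) (β k j) (d + 1))
    refine le_trans (le_of_eq ?_) (t.trans ?_)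
    · congr 1; ring
    · linarith


lemma translation (f : ℝ → ℝ) (hf : Integrable f) (h : ℕ → ℝ) (hh : Tendsto h atTop (nhds 0)) :
    Tendsto (fun k => ∫ s, |f (s + h k) - f s|) atTop (nhds 0) := by
  rw [Metric.tendsto_atTop]
  intro ε hε
  obtain ⟨g, hgs, hfg, hgc, hgi⟩ := hf.exists_hasCompactSupport_integral_sub_le
    (show 0 < ε / 4 by positivity)
  have hg : Tendsto (fun k => ∫ s, |g (s + h k) - g s|) atTop (nhds 0) := by
    obtain ⟨M, hM⟩ := hgc.bounded_above_of_compact_support hgs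
    have hM0 : 0 ≤ M := (norm_nonneg _).trans (hM 0)
    obtain ⟨r, hr⟩ := hgs.isCompact.isBounded.subset_closedBall 0
    have hz : ∀ x, r < |x| → g x = 0 := by
      intro x hx
      by_contra hne
      have := hr (subset_tsupport g hne)
      simp at this
      linarith
    have := tendsto_integral_filter_of_dominated_convergence (μ := volume) (l := atTop)
      (F := fun k s => |g (s + h k) - g s|) (f := fun _ => (0 : ℝ))
      (Set.indicator (Set.Icc (-r - 1) (r + 1)) (fun _ => 2 * M)) ?_ ?_ ?_ ?_
    · simpa using this
    · exact Eventually.of_forall fun k => Continuous.aestronglyMeasurable (by fun_prop)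
    · have h1 : ∀ᶠ k in atTop, |h k| < 1 := by
        have := hh.eventually (Metric.ball_mem_nhds 0 one_pos)
        filter_upwards [this] with k hk
        simpa using hk
      filter_upwards [h1] with k hk
      refine Eventually.of_forall fun s => ?_
      rw [Real.norm_eq_abs, abs_abs]
      by_cases hs : s ∈ Set.Icc (-r - 1) (r + 1)
      · rw [Set.indicator_of_mem hs]
        have e1 := hM (s + h k)
        have e2 := hM s
        rw [Real.norm_eq_abs] at e1 e2
        rw [abs_le] at *
        constructor <;> linarith
      · rw [Set.indicator_of_notMem hs]
        have h2 : r + 1 < |s| := by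
          by_contra hcon
          push Not at hcon
          rw [abs_le] at hcon
          exact hs ⟨by linarith, by linarith⟩
        have h3 : |s| ≤ |s + h k| + |h k| := by
          have := abs_sub (s + h k) (h k)
          simpa using this
        rw [hz s (by linarith), hz (s + h k) (by linarith)]
        simp
    · exact (integrable_indicator_iff measurableSet_Icc).2 (integrableOn_const (by simp))
    · refine Eventually.of_forall fun s => ?_
      have : Tendsto (fun k => |g (s + h k) - g s|) atTop (nhds (|g (s + 0) - g s|)) := by
        have h2 : Tendsto (fun k => s + h k) atTop (nhds (s + 0)) := tendsto_const_nhds.add hh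
        exact ((hgc.tendsto (s + 0)).comp h2 |>.sub_const (g s)).abs
      simpa using this
  rw [Metric.tendsto_atTop] at hg
  obtain ⟨N, hN⟩ := hg (ε / 2) (by positivity)
  refine ⟨N, fun k hk => ?_⟩
  have h1 := hN k hk
  rw [Real.dist_eq, sub_zero, abs_of_nonneg (integral_nonneg fun _ => abs_nonneg _)] at h1 ⊢
  have hd : Integrable (fun s => |f s - g s|) := (hf.sub hgi).abs
  have hd' : Integrable (fun s => |f (s + h k) - g (s + h k)|) := hd.comp_add_right (h k)
  have hgd : Integrable (fun s => |g (s + h k) - g s|) := ((hgi.comp_add_right (h k)).sub hgi).abs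
  have hfd : Integrable (fun s => |f (s + h k) - f s|) := ((hf.comp_add_right (h k)).sub hf).abs
  have hle : ∫ s, |f (s + h k) - f s| ≤
      ∫ s, (|f (s + h k) - g (s + h k)| + |g (s + h k) - g s| + |f s - g s|) := by
    refine integral_mono hfd ((hd'.add hgd).add hd) fun s => ?_
    have := abs_add_three (f (s + h k) - g (s + h k)) (g (s + h k) - g s) (g s - f s)
    rw [abs_sub_comm (g s) (f s)] at this
    refine le_trans (le_of_eq ?_) this
    congr 1; ring
  have e2 := integral_add (hd'.add hgd) hd
  have e3 := integral_add hd' hgd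
  simp only [Pi.add_apply] at e2
  rw [e2, e3,
    integral_add_right_eq_self (fun s => |f s - g s|) (h k)] at hle
  simp only [Real.norm_eq_abs] at hfg
  linarith

lemma ceil_eq {k j : ℕ} (hk : 0 < k) {s : ℝ} (hs : s ∈ Set.Ioc ((j : ℝ) / k) ((j + 1 : ℕ) / k)) :
    ⌈s * k⌉ - 1 = (j : ℤ) := by
  have hk' : (0 : ℝ) < k := by exact_mod_cast hk
  have : ⌈s * k⌉ = (j : ℤ) + 1 := by
    rw [Int.ceil_eq_iff]
    have h1 := (div_lt_iff₀ hk').1 hs.1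
    have h2 := (le_div_iff₀ hk').1 hs.2
    push_cast at h2 ⊢
    constructor <;> linarith
  omega

lemma riemann (k : ℕ) (hk : 0 < k) (F : ℤ → ℝ) :
    (1 / (k : ℝ)) * ∑ j ∈ Finset.range k, F j = ∫ s in (0 : ℝ)..1, F (⌈s * k⌉ - 1) := by
  have hk' : (0 : ℝ) < k := by exact_mod_cast hk
  have hmono : ∀ j : ℕ, (j : ℝ) / k ≤ (j + 1 : ℕ) / k := by
    intro j
    gcongr
    simp
  have hpc : ∀ j : ℕ, Set.EqOn (fun s : ℝ => F (⌈s * k⌉ - 1)) (fun _ => F j)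
      (Set.uIoc ((j : ℝ) / k) ((j + 1 : ℕ) / k)) := by
    intro j s hs
    rw [Set.uIoc_of_le (hmono j)] at hs
    simp only [ceil_eq hk hs]
  have h := intervalIntegral.sum_integral_adjacent_intervals (μ := volume)
    (f := fun s : ℝ => F (⌈s * k⌉ - 1)) (a := fun j : ℕ => (j : ℝ) / k) (n := k) ?_
  · simp only [Nat.cast_zero, zero_div, div_self hk'.ne'] at h
    rw [← h, Finset.mul_sum]
    refine Finset.sum_congr rfl fun j _ => ?_
    rw [intervalIntegral.integral_congr_ae (Eventually.of_forall fun x hx => hpc j hx)]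
    simp
    field_simp
    simp
  · intro j _
    exact (intervalIntegrable_const (c := F j)).congr (hpc j).symm

lemma meas_step (F : ℤ → ℝ) (k : ℕ) : Measurable (fun s : ℝ => F (⌈s * k⌉ - 1)) := by
  have h1 : Measurable (fun s : ℝ => ⌈s * (k : ℝ)⌉) :=
    Int.measurable_ceil.comp (measurable_id.mul_const _)
  exact (measurable_from_top (f := fun n : ℤ => F (n - 1))).comp h1

/-- `L¹` convergence of the step functions. -/
lemma l1conv (a : ℕ → ℕ → ℝ) (A : ℝ → ℝ) (hAmeas : Measurable A)
    (hA1 : ∀ s ∈ Set.Icc (0 : ℝ) 1, A s ∈ Set.Icc (0 : ℝ) 1)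
    (hconvA : ∀ ε : ℝ, 0 < ε →
      Filter.Tendsto
        (fun k : ℕ =>
          MeasureTheory.volume
            {s : ℝ | s ∈ Set.Icc (0 : ℝ) 1 ∧ ε ≤ |a k (⌈s * (k : ℝ)⌉₊ - 1) - A s|})
        Filter.atTop (nhds 0))
    (c : ℕ → ℤ → ℝ) (hc1 : ∀ k i, |c k i| ≤ 1) (hc0 : ∀ (k : ℕ) (i : ℤ), ¬ (0 ≤ i ∧ i < (k : ℤ)) → c k i = 0)
    (hca : ∀ (k : ℕ) (i : ℕ), i + 1 < k → c k i = a k i) :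
    (∀ k : ℕ, 0 < k → Integrable
      (fun s : ℝ => |c k (⌈s * k⌉ - 1) - Set.indicator (Set.Ioc 0 1) A s|)) ∧
    Tendsto (fun k : ℕ => ∫ s : ℝ, |c k (⌈s * k⌉ - 1) - Set.indicator (Set.Ioc 0 1) A s|)
      atTop (nhds 0) := by
  have hAi : Measurable (Set.indicator (Set.Ioc 0 1) A) := hAmeas.indicator measurableSet_Ioc
  have hmeas : ∀ k : ℕ, Measurable
      (fun s : ℝ => |c k (⌈s * k⌉ - 1) - Set.indicator (Set.Ioc 0 1) A s|) := fun k =>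
    measurable_abs.comp ((meas_step (c k) k).sub hAi)
  have hout : ∀ k : ℕ, 0 < k → ∀ s : ℝ, s ∉ Set.Ioc (0 : ℝ) 1 →
      |c k (⌈s * k⌉ - 1) - Set.indicator (Set.Ioc 0 1) A s| = 0 := by
    intro k hk s hs
    have hk' : (0 : ℝ) < k := by exact_mod_cast hk
    rw [Set.indicator_of_notMem hs, hc0, sub_zero, abs_zero]
    rintro ⟨h1, h2⟩
    have h1' : 0 < ⌈s * k⌉ := by omega
    have h2' : ⌈s * k⌉ ≤ (k : ℤ) := by omega
    rw [Int.ceil_pos] at h1'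
    rw [Int.ceil_le] at h2'
    push_cast at h2'
    refine hs ⟨pos_of_mul_pos_left h1' hk'.le, ?_⟩
    by_contra hcon
    push Not at hcon
    nlinarith
  have hb2 : ∀ k : ℕ, ∀ s : ℝ, |c k (⌈s * k⌉ - 1) - Set.indicator (Set.Ioc 0 1) A s| ≤ 2 := by
    intro k s
    have e1 := hc1 k (⌈s * k⌉ - 1)
    have e2 : |Set.indicator (Set.Ioc 0 1) A s| ≤ 1 := by
      by_cases hs : s ∈ Set.Ioc (0 : ℝ) 1
      · rw [Set.indicator_of_mem hs]
        have := hA1 s ⟨hs.1.le, hs.2⟩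
        rw [abs_of_nonneg this.1]; exact this.2
      · rw [Set.indicator_of_notMem hs]; simp
    rw [abs_le] at *
    constructor <;> linarith
  have hIntg : ∀ k : ℕ, 0 < k → Integrable
      (fun s : ℝ => |c k (⌈s * k⌉ - 1) - Set.indicator (Set.Ioc 0 1) A s|) := by
    intro k hk
    have hI : Integrable (Set.indicator (Set.Ioc (0 : ℝ) 1) (fun _ => (2 : ℝ))) :=
      (integrable_indicator_iff measurableSet_Ioc).2 (by simp)
    refine hI.mono' (hmeas k).aestronglyMeasurable (Eventually.of_forall fun s => ?_)
    rw [Real.norm_eq_abs, abs_abs]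
    by_cases hs : s ∈ Set.Ioc (0 : ℝ) 1
    · rw [Set.indicator_of_mem hs (fun _ => (2 : ℝ))]; exact hb2 k s
    · rw [hout k hk s hs, Set.indicator_of_notMem hs]
  refine ⟨hIntg, ?_⟩
  rw [Metric.tendsto_atTop]
  intro ε hε
  set S : ℕ → Set ℝ := fun k =>
    {s : ℝ | s ∈ Set.Icc (0 : ℝ) 1 ∧ ε / 4 ≤ |a k (⌈s * (k : ℝ)⌉₊ - 1) - A s|} with hS
  have hSm : ∀ k, MeasurableSet (S k) := by
    intro k
    have hle : MeasurableSet {s : ℝ | ε / 4 ≤ |a k (⌈s * (k : ℝ)⌉₊ - 1) - A s|} := ?_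
    · exact measurableSet_Icc.inter hle
    refine measurableSet_le measurable_const ?_
    refine measurable_abs.comp (Measurable.sub ?_ hAmeas)
    have h1 : Measurable (fun s : ℝ => ⌈s * (k : ℝ)⌉₊) :=
      Nat.measurable_ceil.comp (measurable_id.mul_const _)
    exact (measurable_from_top (f := fun n : ℕ => a k (n - 1))).comp h1
  have hSfin : ∀ k, volume (S k) ≠ ⊤ := by
    intro k
    refine ne_top_of_le_ne_top ?_ (measure_mono (fun s hs => hs.1 : S k ⊆ Set.Icc 0 1))
    simp
  have hlim : Tendsto (fun k : ℕ => ε / 4 + 2 * (volume (S k)).toReal + 2 * (1 / (k : ℝ)))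
      atTop (nhds (ε / 4 + 2 * 0 + 2 * 0)) := by
    refine Tendsto.add (tendsto_const_nhds.add (Tendsto.const_mul _ ?_))
      (Tendsto.const_mul _ tendsto_one_div_atTop_nhds_zero_nat)
    have := (ENNReal.tendsto_toReal ENNReal.zero_ne_top).comp (hconvA (ε / 4) (by positivity))
    exact this
  have hev := hlim.eventually (gt_mem_nhds (show ε / 4 + 2 * 0 + 2 * 0 < ε by linarith))
  obtain ⟨N, hN⟩ := (hev.and (eventually_gt_atTop 1)).exists_forall_of_atTop
  refine ⟨N, fun k hk => ?_⟩
  obtain ⟨h1, h2⟩ := hN k hk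
  rw [Real.dist_eq, sub_zero, abs_of_nonneg (integral_nonneg fun _ => abs_nonneg _)]
  refine lt_of_le_of_lt ?_ h1
  have hk' : (0 : ℝ) < k := by exact_mod_cast (by omega : 0 < k)
  have i1 : Integrable (Set.indicator (Set.Ioc (0 : ℝ) 1) (fun _ => ε / 4)) :=
    (integrable_indicator_iff measurableSet_Ioc).2 (by simp)
  have i2 : Integrable (Set.indicator (S k) (fun _ => (2 : ℝ))) :=
    (integrable_indicator_iff (hSm k)).2 (by simp [(hSfin k).lt_top])
  have i3 : Integrable (Set.indicator (Set.Ioc (1 - 1 / (k : ℝ)) 1) (fun _ => (2 : ℝ))) :=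
    (integrable_indicator_iff measurableSet_Ioc).2 (by simp)
  have hle := integral_mono (hIntg k (by omega)) ((i1.add i2).add i3) (fun s => ?_)
  · refine hle.trans (le_of_eq ?_)
    simp only [Pi.add_apply]
    have e0 := integral_add (i1.add i2) i3
    have e00 := integral_add i1 i2
    simp only [Pi.add_apply] at e0
    rw [e0, e00, integral_indicator measurableSet_Ioc,
      integral_indicator measurableSet_Ioc, integral_indicator (hSm k)]
    simp [Measure.real, mul_comm]
  · simp only [Pi.add_apply]
    have n1 : 0 ≤ Set.indicator (Set.Ioc (0 : ℝ) 1) (fun _ => ε / 4) s :=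
      Set.indicator_nonneg (fun _ _ => by positivity) s
    have n2 : 0 ≤ Set.indicator (S k) (fun _ => (2 : ℝ)) s :=
      Set.indicator_nonneg (fun _ _ => by positivity) s
    have n3 : 0 ≤ Set.indicator (Set.Ioc (1 - 1 / (k : ℝ)) 1) (fun _ => (2 : ℝ)) s :=
      Set.indicator_nonneg (fun _ _ => by positivity) s
    by_cases hs : s ∈ Set.Ioc (0 : ℝ) 1
    swap
    · rw [hout k (by omega) s hs]; positivity
    by_cases hs3 : s ∈ Set.Ioc (1 - 1 / (k : ℝ)) 1
    · have := hb2 k s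
      rw [Set.indicator_of_mem hs3]
      linarith
    by_cases hs2 : s ∈ S k
    · have := hb2 k s
      rw [Set.indicator_of_mem hs2]
      linarith
    have hsle : s ≤ 1 - 1 / (k : ℝ) := by
      by_contra hcon
      push Not at hcon
      exact hs3 ⟨hcon, hs.2⟩
    have hskle : s * k ≤ ((k - 1 : ℕ) : ℝ) := by
      rw [Nat.cast_sub (by omega)]
      have := mul_le_mul_of_nonneg_right hsle hk'.le
      rw [sub_mul, one_div, inv_mul_cancel₀ hk'.ne'] at this
      simpa using this
    have hn1 : ⌈s * k⌉₊ ≤ k - 1 := Nat.ceil_le.2 hskle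
    have hn2 : 0 < ⌈s * k⌉₊ := Nat.ceil_pos.2 (mul_pos hs.1 hk')
    have hcz : ⌈s * k⌉ - 1 = ((⌈s * k⌉₊ - 1 : ℕ) : ℤ) := by
      have : (⌈s * k⌉₊ : ℤ) = ⌈s * k⌉ := Int.natCast_ceil_eq_ceil (by have := hs.1; positivity)
      omega
    rw [Set.indicator_of_mem hs, Set.indicator_of_mem hs, hcz, hca k _ (by omega)]
    have : ¬ ε / 4 ≤ |a k (⌈s * k⌉₊ - 1) - A s| := fun h => hs2 ⟨⟨hs.1.le, hs.2⟩, h⟩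
    push Not at this
    linarith

lemma var_tendsto (A : ℝ → ℝ) (hA : Integrable A) (c : ℕ → ℤ → ℝ)
    (hi : ∀ k : ℕ, 0 < k → Integrable (fun s : ℝ => |c k (⌈s * k⌉ - 1) - A s|))
    (hl : Tendsto (fun k : ℕ => ∫ s : ℝ, |c k (⌈s * k⌉ - 1) - A s|) atTop (nhds 0)) (d : ℤ) :
    Tendsto (fun k : ℕ => (1 / (k : ℝ)) *
      ∑ j ∈ Finset.range k, |c k (j + d) - c k j|) atTop (nhds 0) := by
  have hd : Tendsto (fun k : ℕ => (d : ℝ) / k) atTop (nhds 0) :=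
    tendsto_const_div_atTop_nhds_zero_nat _
  have hlim := (hl.add (translation A hA _ hd)).add hl
  simp only [add_zero] at hlim
  refine squeeze_zero' (Eventually.of_forall fun k => by positivity) ?_ hlim
  filter_upwards [eventually_gt_atTop 0] with k hk
  have hk' : (0 : ℝ) < k := by exact_mod_cast hk
  rw [riemann k hk (fun j => |c k (j + d) - c k j|)]
  have hsh : ∀ s : ℝ, ⌈(s + d / k) * k⌉ - 1 = ⌈s * k⌉ - 1 + d := by
    intro s
    rw [add_mul, div_mul_cancel₀ _ hk'.ne', Int.ceil_add_intCast]; ring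
  have hi1 : Integrable (fun s : ℝ => |c k (⌈s * k⌉ - 1 + d) - A (s + d / k)|) := by
    have := (hi k hk).comp_add_right ((d : ℝ) / k)
    simpa only [hsh] using this
  have hi2 : Integrable (fun s : ℝ => |A (s + d / k) - A s|) :=
    ((hA.comp_add_right _).sub hA).abs
  have e1 : ∫ s : ℝ, |c k (⌈s * k⌉ - 1) - A s| = ∫ s : ℝ, |c k (⌈s * k⌉ - 1 + d) - A (s + d / k)| := by
    rw [← integral_add_right_eq_self _ ((d : ℝ) / k)]
    simp only [hsh]
  conv_rhs => rw [e1]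
  conv_rhs => rw [← e1, add_comm, ← add_assoc, add_comm, e1]
  have e2 := integral_add (hi1.add hi2) (hi k hk)
  have e3 := integral_add hi1 hi2
  simp only [Pi.add_apply] at e2
  have hpt : ∀ s : ℝ, |c k (⌈s * k⌉ - 1 + d) - c k (⌈s * k⌉ - 1)| ≤
      |c k (⌈s * k⌉ - 1 + d) - A (s + d / k)| + |A (s + d / k) - A s| + |c k (⌈s * k⌉ - 1) - A s| := by
    intro s
    have := abs_add_three (c k (⌈s * k⌉ - 1 + d) - A (s + d / k)) (A (s + d / k) - A s)
      (A s - c k (⌈s * k⌉ - 1))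
    rw [abs_sub_comm (A s)] at this
    refine le_trans (le_of_eq ?_) this
    congr 1; ring
  have hbig : Integrable (fun s : ℝ => |c k (⌈s * k⌉ - 1 + d) - A (s + d / k)| +
      |A (s + d / k) - A s| + |c k (⌈s * k⌉ - 1) - A s|) := (hi1.add hi2).add (hi k hk)
  have hdi : Integrable (fun s : ℝ => |c k (⌈s * k⌉ - 1 + d) - c k (⌈s * k⌉ - 1)|) := by
    refine hbig.mono' (meas_step (fun j => |c k (j + d) - c k j|) k).aestronglyMeasurable
      (Eventually.of_forall fun s => ?_)
    rw [Real.norm_eq_abs, abs_abs]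
    exact hpt s
  have hA1 : ∫ s in (0 : ℝ)..1, |c k (⌈s * k⌉ - 1 + d) - c k (⌈s * k⌉ - 1)| ≤
      ∫ s : ℝ, |c k (⌈s * k⌉ - 1 + d) - c k (⌈s * k⌉ - 1)| := by
    rw [intervalIntegral.integral_of_le zero_le_one]
    exact setIntegral_le_integral hdi (Eventually.of_forall fun _ => abs_nonneg _)
  have := integral_mono hdi hbig hpt
  linarith


lemma indicator_integrable (A : ℝ → ℝ) (hAmeas : Measurable A)
    (hA1 : ∀ s ∈ Set.Icc (0 : ℝ) 1, A s ∈ Set.Icc (0 : ℝ) 1) :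
    Integrable (Set.indicator (Set.Ioc (0 : ℝ) 1) A) := by
  have hI : Integrable (Set.indicator (Set.Ioc (0 : ℝ) 1) (fun _ => (1 : ℝ))) :=
    (integrable_indicator_iff measurableSet_Ioc).2 (by simp)
  refine hI.mono' (hAmeas.indicator measurableSet_Ioc).aestronglyMeasurable
    (Eventually.of_forall fun s => ?_)
  by_cases hs : s ∈ Set.Ioc (0 : ℝ) 1
  · rw [Set.indicator_of_mem hs, Set.indicator_of_mem hs]
    have := hA1 s ⟨hs.1.le, hs.2⟩
    rw [Real.norm_eq_abs, abs_of_nonneg this.1]; exact this.2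
  · rw [Set.indicator_of_notMem hs, Set.indicator_of_notMem hs]; simp

/-- Average of `φ` over the symbol with constant coefficients. -/
def G (φ : ℝ → ℝ) (x y : ℝ) : ℝ :=
  (1 / Real.pi) * ∫ θ in (0 : ℝ)..Real.pi, φ (x + 2 * y * Real.cos θ)

lemma G_continuous (φ : ℝ → ℝ) (hφ : Continuous φ) :
    Continuous (fun p : ℝ × ℝ => G φ p.1 p.2) := by
  unfold G
  refine continuous_const.mul ?_
  apply intervalIntegral.continuous_parametric_intervalIntegral_of_continuous'
  simp only [Function.uncurry_def]
  fun_prop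

lemma Q_eq_G (m : ℕ) (x y : ℝ) : Q m x y 0 = G (fun t => t ^ m) x y := by
  simp [Q, G]

lemma symbol_mem {x y θ : ℝ} (hx : x ∈ Set.Icc (0 : ℝ) 1) (hy : y ∈ Set.Icc (0 : ℝ) 1) :
    x + 2 * y * Real.cos θ ∈ Set.Icc (-3 : ℝ) 3 := by
  have h1 := Real.cos_le_one θ
  have h2 := Real.neg_one_le_cos θ
  obtain ⟨h3, h4⟩ := hx
  obtain ⟨h5, h6⟩ := hy
  constructor <;> nlinarith

lemma G_diff (φ ψ : ℝ → ℝ) (hφ : Continuous φ) (hψ : Continuous ψ) (ε : ℝ)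
    (h : ∀ t ∈ Set.Icc (-3 : ℝ) 3, |φ t - ψ t| ≤ ε) (x y : ℝ)
    (hx : x ∈ Set.Icc (0 : ℝ) 1) (hy : y ∈ Set.Icc (0 : ℝ) 1) : |G φ x y - G ψ x y| ≤ ε := by
  unfold G
  rw [← mul_sub, ← intervalIntegral.integral_sub
    (Continuous.intervalIntegrable (by fun_prop) _ _) (Continuous.intervalIntegrable (by fun_prop) _ _)]
  have := intervalIntegral.norm_integral_le_of_norm_le_const (a := 0) (b := Real.pi) (C := ε)
    (f := fun θ => φ (x + 2 * y * Real.cos θ) - ψ (x + 2 * y * Real.cos θ))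
    (fun θ _ => h _ (symbol_mem hx hy))
  rw [sub_zero, abs_of_pos Real.pi_pos, Real.norm_eq_abs] at this
  rw [abs_mul, abs_of_pos (by have := Real.pi_pos; positivity), one_div]
  rw [inv_mul_le_iff₀ Real.pi_pos]
  linarith

lemma G_intervalIntegrable (φ : ℝ → ℝ) (hφ : Continuous φ) (A B : ℝ → ℝ)
    (hAmeas : Measurable A) (hBmeas : Measurable B)
    (hA1 : ∀ s ∈ Set.Icc (0 : ℝ) 1, A s ∈ Set.Icc (0 : ℝ) 1)
    (hB1 : ∀ s ∈ Set.Icc (0 : ℝ) 1, B s ∈ Set.Icc (0 : ℝ) 1) :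
    IntervalIntegrable (fun s => G φ (A s) (B s)) volume 0 1 := by
  rw [intervalIntegrable_iff_integrableOn_Ioc_of_le zero_le_one]
  have hK : IsCompact (Set.Icc (0 : ℝ) 1 ×ˢ Set.Icc (0 : ℝ) 1) := isCompact_Icc.prod isCompact_Icc
  obtain ⟨M, hM⟩ := hK.exists_bound_of_continuousOn (G_continuous φ hφ).continuousOn
  refine Measure.integrableOn_of_bounded (M := M) (by simp) ?_ ?_
  · exact ((G_continuous φ hφ).measurable.comp (hAmeas.prodMk hBmeas)).aestronglyMeasurable
  · rw [ae_restrict_iff' measurableSet_Ioc]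
    refine Eventually.of_forall fun s hs => ?_
    exact hM (A s, B s) ⟨hA1 s ⟨hs.1.le, hs.2⟩, hB1 s ⟨hs.1.le, hs.2⟩⟩

lemma abs_le_one_of {x : ℝ} (hx : x ∈ Set.Icc (0 : ℝ) 1) : |x| ≤ 1 := by
  rw [abs_of_nonneg hx.1]; exact hx.2

lemma mono_tendsto (a b : ℕ → ℕ → ℝ)
    (ha1 : ∀ k : ℕ, ∀ j < k, |a k j| ≤ 1)
    (hb1 : ∀ k : ℕ, ∀ j < k, 0 < b k j ∧ b k j ≤ 1)
    (A B : ℝ → ℝ) (hAmeas : Measurable A) (hBmeas : Measurable B)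
    (hA1 : ∀ s ∈ Set.Icc (0 : ℝ) 1, A s ∈ Set.Icc (0 : ℝ) 1)
    (hB1 : ∀ s ∈ Set.Icc (0 : ℝ) 1, B s ∈ Set.Icc (0 : ℝ) 1)
    (hconvA : ∀ ε : ℝ, 0 < ε →
      Filter.Tendsto
        (fun k : ℕ =>
          MeasureTheory.volume
            {s : ℝ | s ∈ Set.Icc (0 : ℝ) 1 ∧ ε ≤ |a k (⌈s * (k : ℝ)⌉₊ - 1) - A s|})
        Filter.atTop (nhds 0))
    (hconvB : ∀ ε : ℝ, 0 < ε →
      Filter.Tendsto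
        (fun k : ℕ =>
          MeasureTheory.volume
            {s : ℝ | s ∈ Set.Icc (0 : ℝ) 1 ∧ ε ≤ |b k (⌈s * (k : ℝ)⌉₊ - 1) - B s|})
        Filter.atTop (nhds 0))
    (m : ℕ) :
    Tendsto (fun k : ℕ => (1 / (k : ℝ)) *
      ∑ i, (jacobiMatrix_isHermitian k (a k) (b k)).eigenvalues i ^ m) atTop
      (nhds (∫ s in (0 : ℝ)..1, Q m (A s) (B s) 0)) := by
  have hbabs : ∀ k : ℕ, ∀ j < k, |b k j| ≤ 1 := fun k j hj => by
    rw [abs_of_pos (hb1 k j hj).1]; exact (hb1 k j hj).2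
  set α : ℕ → ℤ → ℝ := fun k => zA k (a k)
  set β : ℕ → ℤ → ℝ := fun k => zB k (b k)
  have hα : ∀ k i, |α k i| ≤ 1 := fun k i => zA_abs k _ (ha1 k) i
  have hβ : ∀ k i, |β k i| ≤ 1 := fun k i => zB_abs k _ (hbabs k) i
  obtain ⟨iA, lA⟩ := l1conv a A hAmeas hA1 hconvA α hα
    (fun k i h => if_neg h) (fun k i h => by
      have : i < k := by omega
      simp [α, zA, this])
  obtain ⟨iB, lB⟩ := l1conv b B hBmeas hB1 hconvB β hβ
    (fun k i h => if_neg (by omega)) (fun k i h => by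
      have : (i : ℤ) + 1 < k := by omega
      simp [β, zB, this])
  have vα := var_tendsto _ (indicator_integrable A hAmeas hA1) α iA lA
  have vβ := var_tendsto _ (indicator_integrable B hBmeas hB1) β iB lB
  have hcmp := main_compare α β hα hβ vα vβ m 0
  obtain ⟨C, hC, hlip⟩ := Q_lip m
  have hlim := hcmp.add ((lA.add lB).const_mul C)
  simp only [add_zero, mul_zero] at hlim
  rw [tendsto_iff_dist_tendsto_zero]
  refine squeeze_zero' (Eventually.of_forall fun k => dist_nonneg) ?_ hlim
  filter_upwards [eventually_gt_atTop 0] with k hk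
  rw [Real.dist_eq, trace_pow]
  have hr := riemann k hk (fun j => Q m (α k j) (β k j) 0)
  have h1 : |1 / (k : ℝ) * ∑ j ∈ Finset.range k, R (α k) (β k) m j j -
      1 / (k : ℝ) * ∑ j ∈ Finset.range k, Q m (α k j) (β k j) 0| ≤
      1 / (k : ℝ) * ∑ j ∈ Finset.range k, |R (α k) (β k) m j j - Q m (α k j) (β k j) 0| := by
    rw [← mul_sub, ← Finset.sum_sub_distrib, abs_mul, abs_of_nonneg (by positivity : 0 ≤ 1 / (k : ℝ))]
    exact mul_le_mul_of_nonneg_left (Finset.abs_sum_le_sum_abs _ _) (by positivity)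
  have hQi : IntervalIntegrable (fun s => Q m (A s) (B s) 0) volume 0 1 := by
    simp_rw [Q_eq_G]
    exact G_intervalIntegrable _ (by fun_prop) A B hAmeas hBmeas hA1 hB1
  have hSi : IntervalIntegrable
      (fun s : ℝ => Q m (α k (⌈s * k⌉ - 1)) (β k (⌈s * k⌉ - 1)) 0) volume 0 1 := by
    rw [intervalIntegrable_iff_integrableOn_Ioc_of_le zero_le_one]
    refine Measure.integrableOn_of_bounded (M := 3 ^ m) (by simp)
      (meas_step (fun j => Q m (α k j) (β k j) 0) k).aestronglyMeasurable
      (Eventually.of_forall fun s => ?_)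
    exact Q_abs m _ _ (hα k _) (hβ k _) 0
  have hsum : Integrable (fun s : ℝ => C * (|α k (⌈s * k⌉ - 1) - Set.indicator (Set.Ioc 0 1) A s| +
      |β k (⌈s * k⌉ - 1) - Set.indicator (Set.Ioc 0 1) B s|)) := ((iA k hk).add (iB k hk)).const_mul C
  have h2 : |(∫ s in (0 : ℝ)..1, Q m (α k (⌈s * k⌉ - 1)) (β k (⌈s * k⌉ - 1)) 0) -
      ∫ s in (0 : ℝ)..1, Q m (A s) (B s) 0| ≤
      C * ((∫ s : ℝ, |α k (⌈s * k⌉ - 1) - Set.indicator (Set.Ioc 0 1) A s|) +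
        ∫ s : ℝ, |β k (⌈s * k⌉ - 1) - Set.indicator (Set.Ioc 0 1) B s|) := by
    rw [← intervalIntegral.integral_sub hSi hQi, ← integral_add (iA k hk) (iB k hk),
      ← integral_const_mul]
    refine (intervalIntegral.abs_integral_le_integral_abs zero_le_one).trans ?_
    rw [intervalIntegral.integral_of_le zero_le_one]
    refine le_trans ?_ (setIntegral_le_integral (s := Set.Ioc 0 1) hsum
      (Eventually.of_forall fun s => by simp only [Pi.zero_apply]; positivity))
    refine setIntegral_mono_on ?_ hsum.integrableOn measurableSet_Ioc ?_
    · exact ((intervalIntegrable_iff_integrableOn_Ioc_of_le zero_le_one).1 (hSi.sub hQi)).abs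
    · intro s hs
      rw [Set.indicator_of_mem hs, Set.indicator_of_mem hs]
      exact hlip _ _ _ _ (hα k _) (hβ k _) (abs_le_one_of (hA1 s ⟨hs.1.le, hs.2⟩))
        (abs_le_one_of (hB1 s ⟨hs.1.le, hs.2⟩)) 0
  rw [← hr] at h2
  exact (abs_sub_le _ _ _).trans (add_le_add h1 h2)

lemma poly_tendsto (a b : ℕ → ℕ → ℝ)
    (ha1 : ∀ k : ℕ, ∀ j < k, |a k j| ≤ 1)
    (hb1 : ∀ k : ℕ, ∀ j < k, 0 < b k j ∧ b k j ≤ 1)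
    (A B : ℝ → ℝ) (hAmeas : Measurable A) (hBmeas : Measurable B)
    (hA1 : ∀ s ∈ Set.Icc (0 : ℝ) 1, A s ∈ Set.Icc (0 : ℝ) 1)
    (hB1 : ∀ s ∈ Set.Icc (0 : ℝ) 1, B s ∈ Set.Icc (0 : ℝ) 1)
    (hconvA : ∀ ε : ℝ, 0 < ε →
      Filter.Tendsto
        (fun k : ℕ =>
          MeasureTheory.volume
            {s : ℝ | s ∈ Set.Icc (0 : ℝ) 1 ∧ ε ≤ |a k (⌈s * (k : ℝ)⌉₊ - 1) - A s|})
        Filter.atTop (nhds 0))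
    (hconvB : ∀ ε : ℝ, 0 < ε →
      Filter.Tendsto
        (fun k : ℕ =>
          MeasureTheory.volume
            {s : ℝ | s ∈ Set.Icc (0 : ℝ) 1 ∧ ε ≤ |b k (⌈s * (k : ℝ)⌉₊ - 1) - B s|})
        Filter.atTop (nhds 0))
    (p : Polynomial ℝ) :
    Tendsto (fun k : ℕ => (1 / (k : ℝ)) * jacobiTrace k (a k) (b k) (fun t => p.eval t)) atTop
      (nhds (∫ s in (0 : ℝ)..1, G (fun t => p.eval t) (A s) (B s))) := by
  induction p using Polynomial.induction_on' with
  | add p q hp hq =>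
    have h := hp.add hq
    rw [← intervalIntegral.integral_add
      (G_intervalIntegrable _ p.continuous A B hAmeas hBmeas hA1 hB1)
      (G_intervalIntegrable _ q.continuous A B hAmeas hBmeas hA1 hB1)] at h
    have e1 : ∀ x y, G (fun t => (p + q).eval t) x y =
        G (fun t => p.eval t) x y + G (fun t => q.eval t) x y := by
      intro x y
      have hp := p.continuous
      have hq := q.continuous
      simp only [G, Polynomial.eval_add]
      rw [intervalIntegral.integral_add (Continuous.intervalIntegrable (by fun_prop) _ _)
        (Continuous.intervalIntegrable (by fun_prop) _ _), mul_add]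
    simp only [e1]
    refine h.congr fun k => ?_
    simp [jacobiTrace, Finset.sum_add_distrib, mul_add]
  | monomial m c =>
    have h := (mono_tendsto a b ha1 hb1 A B hAmeas hBmeas hA1 hB1 hconvA hconvB m).const_mul c
    rw [← intervalIntegral.integral_const_mul] at h
    have e1 : ∀ x y, G (fun t => (Polynomial.monomial m c).eval t) x y = c * Q m x y 0 := by
      intro x y
      simp only [Q_eq_G, G, Polynomial.eval_monomial, intervalIntegral.integral_const_mul]
      ring
    simp only [e1]
    refine h.congr fun k => ?_
    simp only [jacobiTrace, Polynomial.eval_monomial, ← Finset.mul_sum]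
    ring

lemma cont_tendsto (a b : ℕ → ℕ → ℝ)
    (ha1 : ∀ k : ℕ, ∀ j < k, |a k j| ≤ 1)
    (hb1 : ∀ k : ℕ, ∀ j < k, 0 < b k j ∧ b k j ≤ 1)
    (A B : ℝ → ℝ) (hAmeas : Measurable A) (hBmeas : Measurable B)
    (hA1 : ∀ s ∈ Set.Icc (0 : ℝ) 1, A s ∈ Set.Icc (0 : ℝ) 1)
    (hB1 : ∀ s ∈ Set.Icc (0 : ℝ) 1, B s ∈ Set.Icc (0 : ℝ) 1)
    (hconvA : ∀ ε : ℝ, 0 < ε →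
      Filter.Tendsto
        (fun k : ℕ =>
          MeasureTheory.volume
            {s : ℝ | s ∈ Set.Icc (0 : ℝ) 1 ∧ ε ≤ |a k (⌈s * (k : ℝ)⌉₊ - 1) - A s|})
        Filter.atTop (nhds 0))
    (hconvB : ∀ ε : ℝ, 0 < ε →
      Filter.Tendsto
        (fun k : ℕ =>
          MeasureTheory.volume
            {s : ℝ | s ∈ Set.Icc (0 : ℝ) 1 ∧ ε ≤ |b k (⌈s * (k : ℝ)⌉₊ - 1) - B s|})
        Filter.atTop (nhds 0))
    (φ : ℝ → ℝ) (hφ : Continuous φ) :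
    Tendsto (fun k : ℕ => (1 / (k : ℝ)) * jacobiTrace k (a k) (b k) φ) atTop
      (nhds (∫ s in (0 : ℝ)..1, G φ (A s) (B s))) := by
  rw [Metric.tendsto_atTop]
  intro ε hε
  obtain ⟨p, hp⟩ := exists_polynomial_near_of_continuousOn (-3) 3 φ hφ.continuousOn (ε / 4)
    (by positivity)
  have hp' := poly_tendsto a b ha1 hb1 A B hAmeas hBmeas hA1 hB1 hconvA hconvB p
  rw [Metric.tendsto_atTop] at hp'
  obtain ⟨N, hN⟩ := hp' (ε / 4) (by positivity)
  refine ⟨N + 1, fun k hk => ?_⟩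
  have h1 := hN k (by omega)
  have hk' : (0 : ℝ) < k := by exact_mod_cast (by omega : 0 < k)
  have hbabs : ∀ k : ℕ, ∀ j < k, |b k j| ≤ 1 := fun k j hj => by
    rw [abs_of_pos (hb1 k j hj).1]; exact (hb1 k j hj).2
  have h2 : |1 / (k : ℝ) * jacobiTrace k (a k) (b k) (fun t => p.eval t) -
      1 / (k : ℝ) * jacobiTrace k (a k) (b k) φ| ≤ ε / 4 := by
    rw [← mul_sub, jacobiTrace, jacobiTrace, ← Finset.sum_sub_distrib, abs_mul,
      abs_of_nonneg (by positivity : 0 ≤ 1 / (k : ℝ)), one_div, inv_mul_le_iff₀ hk']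
    refine (Finset.abs_sum_le_sum_abs _ _).trans ?_
    refine (Finset.sum_le_sum fun i _ =>
      (hp _ (eig_mem k (a k) (b k) (ha1 k) (hbabs k) i)).le).trans ?_
    simp
  have h3 : |(∫ s in (0 : ℝ)..1, G (fun t => p.eval t) (A s) (B s)) -
      ∫ s in (0 : ℝ)..1, G φ (A s) (B s)| ≤ ε / 4 := by
    rw [← intervalIntegral.integral_sub
      (G_intervalIntegrable _ p.continuous A B hAmeas hBmeas hA1 hB1)
      (G_intervalIntegrable _ hφ A B hAmeas hBmeas hA1 hB1)]
    have := intervalIntegral.norm_integral_le_of_norm_le_const (a := 0) (b := 1) (C := ε / 4)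
      (f := fun s => G (fun t => p.eval t) (A s) (B s) - G φ (A s) (B s)) (fun s hs => by
        rw [Set.uIoc_of_le zero_le_one] at hs
        exact G_diff _ _ p.continuous hφ _ (fun t ht => (hp t ht).le) _ _
          (hA1 s ⟨hs.1.le, hs.2⟩) (hB1 s ⟨hs.1.le, hs.2⟩))
    simpa using this
  rw [Real.dist_eq] at h1 ⊢
  rw [abs_lt] at *
  rw [abs_le] at *
  constructor <;> linarith

end KSC

/-- Kuijlaars–Serra Capizzano: if `|a_j^k| ≤ 1`, `0 < b_j^k ≤ 1` and the entries
converge in measure to bounded measurable `a, b : [0,1] → [0,1]`, then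
`lim (1/k)·Trace[φ(J)] = (1/π) ∫_0^1 ∫_0^π φ(a(x)+2b(x) cos y) dy dx` for every `φ ∈ C[-3,3]`. -/
theorem trace_formula_ksc (a b : ℕ → ℕ → ℝ)
    (ha1 : ∀ k : ℕ, ∀ j < k, |a k j| ≤ 1)
    (hb1 : ∀ k : ℕ, ∀ j < k, 0 < b k j ∧ b k j ≤ 1)
    (A B : ℝ → ℝ) (hAmeas : Measurable A) (hBmeas : Measurable B)
    (hA1 : ∀ s ∈ Set.Icc (0 : ℝ) 1, A s ∈ Set.Icc (0 : ℝ) 1)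
    (hB1 : ∀ s ∈ Set.Icc (0 : ℝ) 1, B s ∈ Set.Icc (0 : ℝ) 1)
    (hconvA : ∀ ε : ℝ, 0 < ε →
      Filter.Tendsto
        (fun k : ℕ =>
          MeasureTheory.volume
            {s : ℝ | s ∈ Set.Icc (0 : ℝ) 1 ∧ ε ≤ |a k (⌈s * (k : ℝ)⌉₊ - 1) - A s|})
        Filter.atTop (nhds 0))
    (hconvB : ∀ ε : ℝ, 0 < ε →
      Filter.Tendsto
        (fun k : ℕ =>
          MeasureTheory.volume
            {s : ℝ | s ∈ Set.Icc (0 : ℝ) 1 ∧ ε ≤ |b k (⌈s * (k : ℝ)⌉₊ - 1) - B s|})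
        Filter.atTop (nhds 0))
    (φ : ℝ → ℝ) (hφ : ContinuousOn φ (Set.Icc (-3 : ℝ) 3)) :
    Filter.Tendsto (fun k : ℕ => (1 / (k : ℝ)) * jacobiTrace k (a k) (b k) φ)
      Filter.atTop
      (nhds ((1 / Real.pi) *
        ∫ x in (0 : ℝ)..1, ∫ y in (0 : ℝ)..Real.pi, φ (A x + 2 * B x * Real.cos y))) := by
  have hbabs : ∀ k : ℕ, ∀ j < k, |b k j| ≤ 1 := fun k j hj => by
    rw [abs_of_pos (hb1 k j hj).1]; exact (hb1 k j hj).2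
  have h33 : (-3 : ℝ) ≤ 3 := by norm_num
  set ψ : ℝ → ℝ := Set.IccExtend h33 (Set.domRestrict (Set.Icc (-3 : ℝ) 3) φ) with hψ
  have hψc : Continuous ψ := (continuousOn_iff_continuous_domRestrict.1 hφ).Icc_extend'
  have heq : ∀ t ∈ Set.Icc (-3 : ℝ) 3, ψ t = φ t := fun t ht => by
    rw [hψ, Set.IccExtend_of_mem h33 _ ht]; rfl
  have h := KSC.cont_tendsto a b ha1 hb1 A B hAmeas hBmeas hA1 hB1 hconvA hconvB ψ hψc
  have e1 : (∫ s in (0 : ℝ)..1, KSC.G ψ (A s) (B s)) = (1 / Real.pi) *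
        ∫ x in (0 : ℝ)..1, ∫ y in (0 : ℝ)..Real.pi, φ (A x + 2 * B x * Real.cos y) := by
    rw [← intervalIntegral.integral_const_mul]
    refine intervalIntegral.integral_congr fun s hs => ?_
    rw [Set.uIcc_of_le zero_le_one] at hs
    simp only [KSC.G]
    congr 1
    refine intervalIntegral.integral_congr fun θ _ => ?_
    exact heq _ (KSC.symbol_mem (hA1 s hs) (hB1 s hs))
  rw [← e1]
  refine h.congr fun k => ?_
  congr 1
  exact Finset.sum_congr rfl fun i _ =>
    heq _ (KSC.eig_mem k (a k) (b k) (ha1 k) (hbabs k) i)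
end
end

section
/- Let (a^k)_k, (b^k)_k be sequences of vectors a^k, b^k ∈ ℝ^k and let r : (0,∞) → (0,∞) be such that the normalized sequences (a^k/r(k))_k and (b^k/r(k))_k belong to the class 𝒮. Suppose in addition that (a^k/r(k), b^k/r(k))_k is μ-distributed for some probability measure μ on I² = [0,1]². Then for every continuous function φ on [−3,3], lim_{k→∞} (1/k)·Trace[φ(J(a^k/r(k), b^k/r(k)))] = (1/π) ∫_{I²} ∫_0^π φ(x + 2y·cos t) dt dμ(x,y). -/
open Filter MeasureTheory

noncomputable section

/-- Jacobi matrix acting on functions on `ℕ`. -/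
def opJ (k : ℕ) (a b : ℕ → ℝ) (x : ℕ → ℝ) : ℕ → ℝ := fun i =>
  a i * x i + (if i + 1 < k then b i * x (i + 1) else 0) +
    (if i = 0 then 0 else b (i - 1) * x (i - 1))

theorem jacobi_mulVec (k : ℕ) (a b x : ℕ → ℝ) :
    (jacobiMatrix k a b).mulVec (fun j => x j) = fun i : Fin k => opJ k a b x i := by
  funext i
  have h1 : ∀ j : Fin k, jacobiMatrix k a b i j * x j =
      ((if (i : ℕ) = (j : ℕ) then a j * x j else 0) +
        (if (i : ℕ) + 1 = (j : ℕ) then b i * x j else 0)) +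
        (if (i : ℕ) = (j : ℕ) + 1 then b j * x j else 0) := by
    intro j
    simp only [jacobiMatrix, Matrix.of_apply]
    by_cases e : i = j
    · subst e
      simp
    · have e' : ¬ (i : ℕ) = (j : ℕ) := fun h => e (Fin.ext h)
      rw [if_neg e', if_neg e']
      by_cases e1 : (i : ℕ) + 1 = (j : ℕ)
      · rw [if_pos e1, if_pos e1, if_neg (by omega)]
        ring
      · rw [if_neg e1, if_neg e1]
        by_cases e2 : (j : ℕ) + 1 = (i : ℕ)
        · rw [if_pos e2, if_pos e2.symm]
          ring
        · rw [if_neg e2, if_neg (fun h => e2 h.symm)]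
          ring
  have h2 : (∑ j : Fin k, if (i : ℕ) = (j : ℕ) + 1 then b j * x j else 0) =
      if (i : ℕ) = 0 then 0 else b (i - 1) * x (i - 1) := by
    rw [Finset.sum_range (n := k) (fun j => if (i : ℕ) = j + 1 then b j * x j else 0) |>.symm]
    split_ifs with h
    · apply Finset.sum_eq_zero
      intro j _
      rw [if_neg (by omega)]
    · rw [Finset.sum_eq_single ((i : ℕ) - 1)]
      · rw [if_pos (by omega)]
      · intro j _ hj
        rw [if_neg (by omega)]
      · intro hj
        exact absurd (Finset.mem_range.2 (by omega)) hj
  have h3 : (∑ j : Fin k, if (i : ℕ) + 1 = (j : ℕ) then b i * x j else 0) =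
      if (i : ℕ) + 1 < k then b i * x (i + 1) else 0 := by
    rw [Finset.sum_range (n := k) (fun j => if (i : ℕ) + 1 = j then b i * x j else 0) |>.symm]
    rw [Finset.sum_ite_eq]
    simp
  have h4 : (∑ j : Fin k, if (i : ℕ) = (j : ℕ) then a j * x j else 0) = a i * x i := by
    rw [Finset.sum_range (n := k) (fun j => if (i : ℕ) = j then a j * x j else 0) |>.symm]
    rw [Finset.sum_ite_eq]
    simp
  simp only [Matrix.mulVec, dotProduct, opJ]
  rw [Finset.sum_congr rfl (fun j _ => h1 j), Finset.sum_add_distrib, Finset.sum_add_distrib,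
    h2, h3, h4]

theorem jacobi_pow_mulVec (k : ℕ) (a b x : ℕ → ℝ) (n : ℕ) :
    (jacobiMatrix k a b ^ n).mulVec (fun j => x j) = fun i : Fin k => ((opJ k a b)^[n] x) i := by
  induction n with
  | zero => simp
  | succ n ih =>
    rw [pow_succ', ← Matrix.mulVec_mulVec, ih, jacobi_mulVec, Function.iterate_succ_apply']

theorem sum_shift_up (m : ℕ) (f : ℕ → ℝ) :
    ∑ i ∈ Finset.range (m + 1), (if i + 1 < m + 1 then f i else 0) =
      ∑ i ∈ Finset.range m, f i := by
  rw [Finset.sum_range_succ, if_neg (by omega), add_zero]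
  apply Finset.sum_congr rfl
  intro i hi
  rw [Finset.mem_range] at hi
  rw [if_pos (by omega)]

theorem sum_shift_down (m : ℕ) (f : ℕ → ℝ) :
    ∑ i ∈ Finset.range (m + 1), (if i = 0 then 0 else f (i - 1)) =
      ∑ i ∈ Finset.range m, f i := by
  rw [Finset.sum_range_succ']
  simp

theorem opJ_sum_le (m : ℕ) (a b x : ℕ → ℝ) (ha : ∀ i < m + 1, a i ∈ Set.Icc (0 : ℝ) 1)
    (hb : ∀ i < m + 1, b i ∈ Set.Icc (0 : ℝ) 1) :
    ∑ i ∈ Finset.range (m + 1), |opJ (m + 1) a b x i| ≤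
      3 * ∑ i ∈ Finset.range (m + 1), |x i| := by
  have key : ∀ i ∈ Finset.range (m + 1), |opJ (m + 1) a b x i| ≤
      |x i| + (if i + 1 < m + 1 then |x (i + 1)| else 0) +
      (if i = 0 then 0 else |x (i - 1)|) := by
    intro i hi
    rw [Finset.mem_range] at hi
    have hmul : ∀ c y : ℝ, c ∈ Set.Icc (0 : ℝ) 1 → |c * y| ≤ |y| := by
      intro c y hc
      rw [abs_mul, abs_of_nonneg hc.1]
      exact mul_le_of_le_one_left (abs_nonneg _) hc.2
    unfold opJ
    refine (abs_add_le _ _).trans (add_le_add ((abs_add_le _ _).trans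
      (add_le_add (hmul _ _ (ha i hi)) ?_)) ?_)
    · split_ifs
      · exact hmul _ _ (hb i hi)
      · simp
    · split_ifs
      · simp
      · exact hmul _ _ (hb _ (by omega))
  refine (Finset.sum_le_sum key).trans ?_
  rw [Finset.sum_add_distrib, Finset.sum_add_distrib, sum_shift_up m (fun i => |x (i + 1)|),
    sum_shift_down m (fun i => |x i|)]
  have e1 := Finset.sum_range_succ' (fun i => |x i|) m
  have e2 := Finset.sum_range_succ (fun i => |x i|) m
  have := abs_nonneg (x 0)
  have := abs_nonneg (x m)
  linarith

theorem jacobi_eigen_mem (k : ℕ) (a b : ℕ → ℝ) (ha : ∀ i < k, a i ∈ Set.Icc (0 : ℝ) 1)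
    (hb : ∀ i < k, b i ∈ Set.Icc (0 : ℝ) 1) (i : Fin k) :
    (jacobiMatrix_isHermitian k a b).eigenvalues i ∈ Set.Icc (-3 : ℝ) 3 := by
  obtain _ | m := k
  · exact i.elim0
  set hA := jacobiMatrix_isHermitian (m + 1) a b
  set v := hA.eigenvectorBasis i with hv
  let x : ℕ → ℝ := fun j => if h : j < m + 1 then v ⟨j, h⟩ else 0
  have hx : (fun j : Fin (m + 1) => x j) = ⇑v := by
    funext j
    simp only [x]
    rw [dif_pos j.2]
  have h1 := hA.mulVec_eigenvectorBasis i
  rw [← hv, ← hx, jacobi_mulVec] at h1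
  have h2 : ∑ j ∈ Finset.range (m + 1), |opJ (m + 1) a b x j| =
      |hA.eigenvalues i| * ∑ j ∈ Finset.range (m + 1), |x j| := by
    rw [Finset.sum_range, Finset.sum_range, Finset.mul_sum]
    apply Finset.sum_congr rfl
    intro j _
    have := congrFun h1 j
    simp only [Pi.smul_apply, smul_eq_mul] at this
    rw [this, abs_mul]
  have h3 := opJ_sum_le m a b x ha hb
  rw [h2] at h3
  have hpos : 0 < ∑ j ∈ Finset.range (m + 1), |x j| := by
    have hnn : 0 ≤ ∑ j ∈ Finset.range (m + 1), |x j| :=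
      Finset.sum_nonneg fun _ _ => abs_nonneg _
    refine lt_of_le_of_ne hnn fun h0 => ?_
    have hz := (Finset.sum_eq_zero_iff_of_nonneg (fun _ _ => abs_nonneg _)).1 h0.symm
    have hv0 : v = 0 := by
      ext j
      have := hz j (Finset.mem_range.2 j.2)
      rw [abs_eq_zero] at this
      rw [← congrFun hx j, this]
      rfl
    have := hA.eigenvectorBasis.orthonormal.1 i
    rw [← hv, hv0] at this
    simp at this
  exact abs_le.1 (le_of_mul_le_mul_right h3 hpos)

theorem jacobi_sum_eigen_pow (k : ℕ) (a b : ℕ → ℝ) (n : ℕ) :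
    jacobiTrace k a b (fun x => x ^ n) = (jacobiMatrix k a b ^ n).trace := by
  have hA := jacobiMatrix_isHermitian k a b
  unfold jacobiTrace
  conv_rhs => rw [hA.spectral_theorem, ← map_pow, Unitary.conjStarAlgAut_apply,
    Matrix.trace_mul_comm, ← mul_assoc]
  simp [Matrix.diagonal_pow, Matrix.trace_diagonal]

/-- error of the approximate eigenvectors -/
theorem approx_step (m : ℕ) (a b f : ℕ → ℝ) (c : ℝ) (hc : |c| ≤ 1)
    (ha : ∀ i < m + 1, a i ∈ Set.Icc (0 : ℝ) 1)
    (hb : ∀ i < m + 1, b i ∈ Set.Icc (0 : ℝ) 1) (hf1 : ∀ i, |f i| ≤ 1)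
    (hf : ∀ i, f (i + 2) + f i = 2 * c * f (i + 1)) (n : ℕ) :
    ∑ i ∈ Finset.range (m + 1), |opJ (m + 1) a b
        (fun i => (a i + 2 * b i * c) ^ n * f (i + 1)) i -
        (a i + 2 * b i * c) ^ (n + 1) * f (i + 1)| ≤
      ((4 * n + 1) * 3 ^ n) * (∑ i ∈ Finset.range m, |a (i + 1) - a i| +
        ∑ i ∈ Finset.range m, |b (i + 1) - b i| + 2) := by
  set p : ℕ → ℝ := fun i => a i + 2 * b i * c with hp
  have hc' := abs_le.1 hc
  have hp3 : ∀ i < m + 1, |p i| ≤ 3 := by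
    intro i hi
    have h1 := ha i hi
    have h2 := hb i hi
    have : |b i * c| ≤ 1 := by
      rw [abs_mul, abs_of_nonneg h2.1]
      exact mul_le_one₀ h2.2 (abs_nonneg _) hc
    rw [abs_le] at this ⊢
    simp only [hp]
    constructor <;> linarith [h1.1, h1.2]
  have hpn : ∀ i < m + 1, |p i ^ n| ≤ 3 ^ n := by
    intro i hi
    rw [abs_pow]
    exact pow_le_pow_left₀ (abs_nonneg _) (hp3 i hi) n
  have hdp : ∀ i < m, |p (i + 1) - p i| ≤ |a (i + 1) - a i| + 2 * |b (i + 1) - b i| := by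
    intro i hi
    have : p (i + 1) - p i = (a (i + 1) - a i) + 2 * ((b (i + 1) - b i) * c) := by
      simp only [hp]; ring
    rw [this]
    refine (abs_add_le _ _).trans ?_
    rw [abs_mul 2, abs_mul _ c, abs_of_pos (by norm_num : (0 : ℝ) < 2)]
    have := mul_le_of_le_one_right (abs_nonneg (b (i + 1) - b i)) hc
    linarith
  have hdpn : ∀ i < m, |p (i + 1) ^ n - p i ^ n| ≤
      (|a (i + 1) - a i| + 2 * |b (i + 1) - b i|) * (n * 3 ^ n) := by
    intro i hi
    refine (abs_pow_sub_pow_le _ _ n).trans ?_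
    rw [mul_assoc]
    refine mul_le_mul (hdp i hi) ?_ (by positivity) (by positivity)
    refine mul_le_mul_of_nonneg_left ?_ (by positivity)
    have hmax : max |p (i + 1)| |p i| ≤ 3 :=
      max_le (hp3 _ (by omega)) (hp3 _ (by omega))
    calc (max |p (i + 1)| |p i|) ^ (n - 1) ≤ 3 ^ (n - 1) :=
          pow_le_pow_left₀ (le_max_of_le_left (abs_nonneg _)) hmax _
      _ ≤ 3 ^ n := pow_le_pow_right₀ (by norm_num) (by omega)
  set A : ℕ → ℝ := fun i => if i + 1 < m + 1 then |p (i + 1) ^ n - p i ^ n| else 0 with hA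
  set B : ℕ → ℝ := fun i => if i = 0 then 0 else
    |b (i - 1) * p (i - 1) ^ n - b (i - 1 + 1) * p (i - 1 + 1) ^ n| with hB
  have hbmul : ∀ i < m + 1, ∀ y : ℝ, |b i * y| ≤ |y| := by
    intro i hi y
    rw [abs_mul, abs_of_nonneg (hb i hi).1]
    exact mul_le_of_le_one_left (abs_nonneg _) (hb i hi).2
  have hfmul : ∀ i, ∀ y : ℝ, |y * f i| ≤ |y| := by
    intro i y
    rw [abs_mul]
    exact mul_le_of_le_one_right (abs_nonneg _) (hf1 i)
  have key : ∀ i ∈ Finset.range (m + 1), |opJ (m + 1) a b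
        (fun i => p i ^ n * f (i + 1)) i - p i ^ (n + 1) * f (i + 1)| ≤
      (A i + if i = m then (3 : ℝ) ^ n else 0) + (B i + if i = 0 then (3 : ℝ) ^ n else 0) := by
    intro i hi
    rw [Finset.mem_range] at hi
    have e : opJ (m + 1) a b (fun i => p i ^ n * f (i + 1)) i - p i ^ (n + 1) * f (i + 1) =
        (if i + 1 < m + 1 then b i * (p (i + 1) ^ n - p i ^ n) * f (i + 2)
          else - (b i * p i ^ n * f (i + 2))) +
        (if i = 0 then - (b i * p i ^ n * f i) else
          (b (i - 1) * p (i - 1) ^ n - b (i - 1 + 1) * p (i - 1 + 1) ^ n) * f i) := by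
      have e1 : p i ^ (n + 1) * f (i + 1) =
          a i * (p i ^ n * f (i + 1)) + b i * p i ^ n * (f (i + 2) + f i) := by
        rw [hf, pow_succ]
        simp only [hp]; ring
      rw [e1]
      simp only [opJ]
      by_cases h0 : i = 0
      · rw [if_pos h0, if_pos h0]
        split_ifs <;> ring
      · rw [if_neg h0, if_neg h0]
        have : i - 1 + 1 = i := by omega
        rw [this]
        split_ifs <;> ring
    rw [e]
    refine (abs_add_le _ _).trans (add_le_add ?_ ?_)
    · simp only [hA]
      split_ifs with h1 h2 h2
      · omega
      · rw [add_zero]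
        exact (hfmul _ _).trans (hbmul i hi _)
      · rw [abs_neg, zero_add]
        exact ((hfmul _ _).trans (hbmul i hi _)).trans (hpn i hi)
      · omega
    · simp only [hB]
      split_ifs with h1
      · rw [abs_neg, zero_add]
        exact ((hfmul _ _).trans (hbmul i hi _)).trans (hpn i hi)
      · rw [add_zero]
        exact hfmul _ _
  refine (Finset.sum_le_sum key).trans ?_
  rw [Finset.sum_add_distrib, Finset.sum_add_distrib, Finset.sum_add_distrib,
    Finset.sum_ite_eq' , Finset.sum_ite_eq', if_pos (by simp), if_pos (by simp),
    sum_shift_up m (fun i => |p (i + 1) ^ n - p i ^ n|),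
    sum_shift_down m (fun i => |b i * p i ^ n - b (i + 1) * p (i + 1) ^ n|)]
  have s1 : ∑ i ∈ Finset.range m, |p (i + 1) ^ n - p i ^ n| ≤
      ∑ i ∈ Finset.range m, (|a (i + 1) - a i| + 2 * |b (i + 1) - b i|) * (n * 3 ^ n) :=
    Finset.sum_le_sum fun i hi => hdpn i (Finset.mem_range.1 hi)
  have s2 : ∑ i ∈ Finset.range m, |b i * p i ^ n - b (i + 1) * p (i + 1) ^ n| ≤
      ∑ i ∈ Finset.range m, ((|a (i + 1) - a i| + 2 * |b (i + 1) - b i|) * (n * 3 ^ n)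
        + |b (i + 1) - b i| * 3 ^ n) := by
    refine Finset.sum_le_sum fun i hi => ?_
    rw [Finset.mem_range] at hi
    have : b i * p i ^ n - b (i + 1) * p (i + 1) ^ n =
      - (b i * (p (i + 1) ^ n - p i ^ n)) - (b (i + 1) - b i) * p (i + 1) ^ n := by ring
    rw [this]
    refine (abs_sub _ _).trans (add_le_add ?_ ?_)
    · rw [abs_neg]
      exact (hbmul i (by omega) _).trans (hdpn i hi)
    · rw [abs_mul]
      exact mul_le_mul_of_nonneg_left (hpn _ (by omega)) (abs_nonneg _)
  rw [← Finset.sum_mul, Finset.sum_add_distrib, ← Finset.mul_sum] at s1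
  rw [Finset.sum_add_distrib, ← Finset.sum_mul, Finset.sum_add_distrib, ← Finset.mul_sum,
    ← Finset.sum_mul] at s2
  have hVa : 0 ≤ ∑ i ∈ Finset.range m, |a (i + 1) - a i| :=
    Finset.sum_nonneg fun _ _ => abs_nonneg _
  have hVb : 0 ≤ ∑ i ∈ Finset.range m, |b (i + 1) - b i| :=
    Finset.sum_nonneg fun _ _ => abs_nonneg _
  have h3n : (0 : ℝ) < 3 ^ n := by positivity
  have t1 : 0 ≤ (n : ℝ) * 3 ^ n := by positivity
  have t2 := mul_nonneg t1 hVa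
  have t3 := mul_nonneg h3n.le hVa
  nlinarith

/-- constants -/
def errC : ℕ → ℝ
  | 0 => 0
  | n + 1 => 3 * errC n + (4 * n + 1) * 3 ^ n

theorem approx_pow (m : ℕ) (a b f : ℕ → ℝ) (c : ℝ) (hc : |c| ≤ 1)
    (ha : ∀ i < m + 1, a i ∈ Set.Icc (0 : ℝ) 1)
    (hb : ∀ i < m + 1, b i ∈ Set.Icc (0 : ℝ) 1) (hf1 : ∀ i, |f i| ≤ 1)
    (hf : ∀ i, f (i + 2) + f i = 2 * c * f (i + 1)) (n : ℕ) :
    ∑ i ∈ Finset.range (m + 1), |((opJ (m + 1) a b)^[n] (fun i => f (i + 1))) i -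
        (a i + 2 * b i * c) ^ n * f (i + 1)| ≤
      errC n * (∑ i ∈ Finset.range m, |a (i + 1) - a i| +
        ∑ i ∈ Finset.range m, |b (i + 1) - b i| + 2) := by
  induction n with
  | zero => simp [errC]
  | succ n ih =>
    set x := (opJ (m + 1) a b)^[n] (fun i => f (i + 1)) with hx
    set y : ℕ → ℝ := fun i => (a i + 2 * b i * c) ^ n * f (i + 1) with hy
    have h1 := opJ_sum_le m a b (fun i => x i - y i) ha hb
    have h2 := approx_step m a b f c hc ha hb hf1 hf n
    rw [Function.iterate_succ_apply', ← hx]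
    have hlin : ∀ i, opJ (m + 1) a b (fun i => x i - y i) i =
        opJ (m + 1) a b x i - opJ (m + 1) a b y i := by
      intro i
      simp only [opJ]
      split_ifs <;> ring
    have h3 : ∑ i ∈ Finset.range (m + 1), |opJ (m + 1) a b x i -
        (a i + 2 * b i * c) ^ (n + 1) * f (i + 1)| ≤
        ∑ i ∈ Finset.range (m + 1), (|opJ (m + 1) a b (fun i => x i - y i) i| +
          |opJ (m + 1) a b y i - (a i + 2 * b i * c) ^ (n + 1) * f (i + 1)|) := by
      refine Finset.sum_le_sum fun i _ => ?_
      rw [hlin]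
      exact abs_sub_le _ _ _
    rw [Finset.sum_add_distrib] at h3
    have e : errC (n + 1) = 3 * errC n + (4 * n + 1) * 3 ^ n := rfl
    rw [e, add_mul]
    linarith

theorem integral_cos_int (z : ℤ) :
    ∫ t in (0 : ℝ)..Real.pi, Real.cos ((z : ℝ) * t) = if z = 0 then Real.pi else 0 := by
  split_ifs with h
  · subst h
    simp
  · have hz : (z : ℝ) ≠ 0 := by exact_mod_cast h
    rw [intervalIntegral.integral_comp_mul_left (fun x => Real.cos x) hz, integral_cos,
      Real.sin_int_mul_pi]
    simp

theorem trace_pointwise (m : ℕ) (a b : ℕ → ℝ) (t : ℝ)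
    (ha : ∀ i < m + 1, a i ∈ Set.Icc (0 : ℝ) 1)
    (hb : ∀ i < m + 1, b i ∈ Set.Icc (0 : ℝ) 1) (n : ℕ) :
    |(∑ i : Fin (m + 1), ∑ j : Fin (m + 1), (jacobiMatrix (m + 1) a b ^ n) i j *
        Real.cos ((((i : ℕ) : ℤ) - ((j : ℕ) : ℤ) : ℤ) * t)) -
      ∑ i ∈ Finset.range (m + 1), (a i + 2 * b i * Real.cos t) ^ n| ≤
      2 * (errC n * (∑ i ∈ Finset.range m, |a (i + 1) - a i| +
        ∑ i ∈ Finset.range m, |b (i + 1) - b i| + 2)) := by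
  set M := jacobiMatrix (m + 1) a b ^ n
  have hC := approx_pow m a b (fun i => Real.cos (i * t)) (Real.cos t) (Real.abs_cos_le_one t)
    ha hb (fun i => Real.abs_cos_le_one _) (fun i => by
      have e1 : ((i + 2 : ℕ) : ℝ) * t = ((i + 1 : ℕ) : ℝ) * t + t := by push_cast; ring
      have e2 : (i : ℝ) * t = ((i + 1 : ℕ) : ℝ) * t - t := by push_cast; ring
      rw [e1, e2, Real.cos_add, Real.cos_sub]; ring) n
  have hS := approx_pow m a b (fun i => Real.sin (i * t)) (Real.cos t) (Real.abs_cos_le_one t)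
    ha hb (fun i => Real.abs_sin_le_one _) (fun i => by
      have e1 : ((i + 2 : ℕ) : ℝ) * t = ((i + 1 : ℕ) : ℝ) * t + t := by push_cast; ring
      have e2 : (i : ℝ) * t = ((i + 1 : ℕ) : ℝ) * t - t := by push_cast; ring
      rw [e1, e2, Real.sin_add, Real.sin_sub]; ring) n
  set X := (opJ (m + 1) a b)^[n] (fun i => Real.cos ((i + 1 : ℕ) * t)) with hX
  set Y := (opJ (m + 1) a b)^[n] (fun i => Real.sin ((i + 1 : ℕ) * t)) with hY
  have hXi := fun i => congrFun (jacobi_pow_mulVec (m + 1) a b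
    (fun i => Real.cos ((i + 1 : ℕ) * t)) n) i
  have hYi := fun i => congrFun (jacobi_pow_mulVec (m + 1) a b
    (fun i => Real.sin ((i + 1 : ℕ) * t)) n) i
  simp only [Matrix.mulVec, dotProduct] at hXi hYi
  have hG : (∑ i : Fin (m + 1), ∑ j : Fin (m + 1), M i j *
        Real.cos ((((i : ℕ) : ℤ) - ((j : ℕ) : ℤ) : ℤ) * t)) =
      ∑ i ∈ Finset.range (m + 1), (Real.cos ((i + 1 : ℕ) * t) * X i +
        Real.sin ((i + 1 : ℕ) * t) * Y i) := by
    rw [Finset.sum_range]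
    refine Finset.sum_congr rfl fun i _ => ?_
    rw [hX, hY, ← hXi, ← hYi, Finset.mul_sum, Finset.mul_sum, ← Finset.sum_add_distrib]
    refine Finset.sum_congr rfl fun j _ => ?_
    have e : ((((i : ℕ) : ℤ) - ((j : ℕ) : ℤ) : ℤ) : ℝ) * t =
      (((i : ℕ) + 1 : ℕ) : ℝ) * t - (((j : ℕ) + 1 : ℕ) : ℝ) * t := by push_cast; ring
    rw [e, Real.cos_sub]
    ring
  rw [hG, ← Finset.sum_sub_distrib]
  refine (Finset.abs_sum_le_sum_abs _ _).trans ?_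
  have : ∀ i ∈ Finset.range (m + 1), |Real.cos ((i + 1 : ℕ) * t) * X i +
        Real.sin ((i + 1 : ℕ) * t) * Y i - (a i + 2 * b i * Real.cos t) ^ n| ≤
      |X i - (a i + 2 * b i * Real.cos t) ^ n * Real.cos ((i + 1 : ℕ) * t)| +
      |Y i - (a i + 2 * b i * Real.cos t) ^ n * Real.sin ((i + 1 : ℕ) * t)| := by
    intro i _
    set p := (a i + 2 * b i * Real.cos t) ^ n
    set c := Real.cos ((i + 1 : ℕ) * t) with hc
    set s := Real.sin ((i + 1 : ℕ) * t) with hs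
    have hcs : s ^ 2 + c ^ 2 = 1 := Real.sin_sq_add_cos_sq _
    have e : c * X i + s * Y i - p = c * (X i - p * c) + s * (Y i - p * s) := by
      linear_combination p * hcs
    rw [e]
    refine (abs_add_le _ _).trans (add_le_add ?_ ?_)
    · rw [abs_mul]
      exact mul_le_of_le_one_left (abs_nonneg _) (Real.abs_cos_le_one _)
    · rw [abs_mul]
      exact mul_le_of_le_one_left (abs_nonneg _) (Real.abs_sin_le_one _)
  refine (Finset.sum_le_sum this).trans ?_
  rw [Finset.sum_add_distrib]
  linarith

/-- Discrepancy between the trace and the local averages. -/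
def discr (k : ℕ) (a b : ℕ → ℝ) (φ : ℝ → ℝ) : ℝ :=
  jacobiTrace k a b φ - (1 / Real.pi) * ∑ i ∈ Finset.range k,
    ∫ t in (0 : ℝ)..Real.pi, φ (a i + 2 * b i * Real.cos t)

theorem discr_pow (m : ℕ) (a b : ℕ → ℝ)
    (ha : ∀ i < m + 1, a i ∈ Set.Icc (0 : ℝ) 1)
    (hb : ∀ i < m + 1, b i ∈ Set.Icc (0 : ℝ) 1) (n : ℕ) :
    |discr (m + 1) a b (fun x => x ^ n)| ≤
      2 * (errC n * (∑ i ∈ Finset.range m, |a (i + 1) - a i| +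
        ∑ i ∈ Finset.range m, |b (i + 1) - b i| + 2)) := by
  have hpi := Real.pi_pos
  set K := 2 * (errC n * (∑ i ∈ Finset.range m, |a (i + 1) - a i| +
        ∑ i ∈ Finset.range m, |b (i + 1) - b i| + 2))
  have h1 := intervalIntegral.norm_integral_le_of_norm_le_const (a := 0) (b := Real.pi)
    (fun t _ => (Real.norm_eq_abs _).trans_le (trace_pointwise m a b t ha hb n))
  rw [intervalIntegral.integral_sub (Continuous.intervalIntegrable (by fun_prop) _ _)
    (Continuous.intervalIntegrable (by fun_prop) _ _),
    intervalIntegral.integral_finsetSum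
      (fun i _ => Continuous.intervalIntegrable (by fun_prop) _ _),
    intervalIntegral.integral_finsetSum
      (fun i _ => Continuous.intervalIntegrable (by fun_prop) _ _)] at h1
  have h2 : ∑ i : Fin (m + 1), ∫ t in (0 : ℝ)..Real.pi, ∑ j : Fin (m + 1),
      (jacobiMatrix (m + 1) a b ^ n) i j *
        Real.cos ((((i : ℕ) : ℤ) - ((j : ℕ) : ℤ) : ℤ) * t) =
      Real.pi * (jacobiMatrix (m + 1) a b ^ n).trace := by
    rw [Matrix.trace, Finset.mul_sum]
    refine Finset.sum_congr rfl fun i _ => ?_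
    rw [intervalIntegral.integral_finsetSum
      (fun i _ => Continuous.intervalIntegrable (by fun_prop) _ _)]
    rw [Finset.sum_eq_single i]
    · rw [intervalIntegral.integral_const_mul, integral_cos_int, if_pos (by simp)]
      simp [mul_comm]
    · intro j _ hj
      rw [intervalIntegral.integral_const_mul, integral_cos_int, if_neg, mul_zero]
      intro h
      apply hj
      apply Fin.ext
      omega
    · intro h
      exact absurd (Finset.mem_univ _) h
  rw [h2, sub_zero, abs_of_pos hpi, Real.norm_eq_abs] at h1
  unfold discr
  rw [jacobi_sum_eigen_pow]
  refine le_of_mul_le_mul_right ?_ hpi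
  refine le_trans (le_of_eq ?_) h1
  conv_lhs => rw [← abs_of_pos hpi, ← abs_mul, abs_of_pos hpi]
  congr 1
  field_simp

theorem discr_add (k : ℕ) (a b : ℕ → ℝ) (f g : ℝ → ℝ) (hf : Continuous f) (hg : Continuous g) :
    discr k a b (fun x => f x + g x) = discr k a b f + discr k a b g := by
  unfold discr jacobiTrace
  rw [Finset.sum_add_distrib]
  have : ∀ i, ∫ t in (0 : ℝ)..Real.pi, (f (a i + 2 * b i * Real.cos t) +
      g (a i + 2 * b i * Real.cos t)) =
      (∫ t in (0 : ℝ)..Real.pi, f (a i + 2 * b i * Real.cos t)) +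
      ∫ t in (0 : ℝ)..Real.pi, g (a i + 2 * b i * Real.cos t) := fun i =>
    intervalIntegral.integral_add (Continuous.intervalIntegrable (by fun_prop) _ _)
      (Continuous.intervalIntegrable (by fun_prop) _ _)
  simp only [this, Finset.sum_add_distrib]
  ring

theorem discr_const_mul (k : ℕ) (a b : ℕ → ℝ) (c : ℝ) (f : ℝ → ℝ) :
    discr k a b (fun x => c * f x) = c * discr k a b f := by
  unfold discr jacobiTrace
  simp only [intervalIntegral.integral_const_mul, ← Finset.mul_sum]
  ring

theorem discr_pow_tendsto (a b : ℕ → ℕ → ℝ) (ha : MemS a) (hb : MemS b) (n : ℕ) :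
    Tendsto (fun k : ℕ => (1 / (k : ℝ)) * discr k (a k) (b k) (fun x => x ^ n)) atTop
      (nhds 0) := by
  have h1 := ha.1.tendsto_div_nhds_zero
  have h2 := hb.1.tendsto_div_nhds_zero
  have h3 : Tendsto (fun k : ℕ => (2 : ℝ) / (k : ℝ)) atTop (nhds 0) :=
    tendsto_const_div_atTop_nhds_zero_nat 2
  have h4 := ((h1.add h2).add h3).const_mul (2 * errC n)
  simp only [add_zero, mul_zero] at h4
  refine squeeze_zero_norm' ?_ h4
  filter_upwards [eventually_ge_atTop 1] with k hk
  obtain ⟨m, rfl⟩ : ∃ m, k = m + 1 := ⟨k - 1, by omega⟩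
  have := discr_pow m (a (m + 1)) (b (m + 1)) (ha.2 _) (hb.2 _) n
  have hpos : (0 : ℝ) < 1 / ((m + 1 : ℕ) : ℝ) := by positivity
  rw [Real.norm_eq_abs, abs_mul, abs_of_pos hpos]
  refine (mul_le_mul_of_nonneg_left this hpos.le).trans (le_of_eq ?_)
  simp only [Nat.add_sub_cancel]
  ring

theorem discr_poly_tendsto (a b : ℕ → ℕ → ℝ) (ha : MemS a) (hb : MemS b)
    (q : Polynomial ℝ) :
    Tendsto (fun k : ℕ => (1 / (k : ℝ)) * discr k (a k) (b k) (fun x => q.eval x)) atTop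
      (nhds 0) := by
  induction q using Polynomial.induction_on' with
  | add p q hp hq =>
    have := hp.add hq
    rw [add_zero] at this
    refine this.congr fun k => ?_
    simp only [Polynomial.eval_add]
    rw [discr_add _ _ _ _ _ p.continuous q.continuous]
    ring
  | monomial n c =>
    have := (discr_pow_tendsto a b ha hb n).const_mul c
    rw [mul_zero] at this
    refine this.congr fun k => ?_
    simp only [Polynomial.eval_monomial]
    rw [discr_const_mul]
    ring

theorem point_mem {x y : ℝ} (hx : x ∈ Set.Icc (0 : ℝ) 1) (hy : y ∈ Set.Icc (0 : ℝ) 1) (t : ℝ) :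
    x + 2 * y * Real.cos t ∈ Set.Icc (-3 : ℝ) 3 := by
  have : |y * Real.cos t| ≤ 1 := by
    rw [abs_mul, abs_of_nonneg hy.1]
    exact mul_le_one₀ hy.2 (abs_nonneg _) (Real.abs_cos_le_one t)
  rw [abs_le] at this
  constructor <;> linarith [hx.1, hx.2]

theorem discr_close (k : ℕ) (hk : 0 < k) (a b : ℕ → ℝ) (ha : ∀ i < k, a i ∈ Set.Icc (0 : ℝ) 1)
    (hb : ∀ i < k, b i ∈ Set.Icc (0 : ℝ) 1) (f g : ℝ → ℝ)
    (hf : ContinuousOn f (Set.Icc (-3 : ℝ) 3)) (hg : Continuous g) (ε : ℝ)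
    (hε : ∀ x ∈ Set.Icc (-3 : ℝ) 3, |g x - f x| ≤ ε) :
    |(1 / (k : ℝ)) * discr k a b f - (1 / (k : ℝ)) * discr k a b g| ≤ 2 * ε := by
  have hpi := Real.pi_pos
  have hk' : (0 : ℝ) < k := by exact_mod_cast hk
  have h1 : |jacobiTrace k a b g - jacobiTrace k a b f| ≤ k * ε := by
    unfold jacobiTrace
    rw [← Finset.sum_sub_distrib]
    refine (Finset.abs_sum_le_sum_abs _ _).trans ?_
    refine (Finset.sum_le_sum fun i _ => hε _ (jacobi_eigen_mem k a b ha hb i)).trans ?_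
    simp
  have h2 : |(∑ i ∈ Finset.range k, ∫ t in (0 : ℝ)..Real.pi, g (a i + 2 * b i * Real.cos t)) -
      ∑ i ∈ Finset.range k, ∫ t in (0 : ℝ)..Real.pi, f (a i + 2 * b i * Real.cos t)| ≤
      k * (ε * Real.pi) := by
    rw [← Finset.sum_sub_distrib]
    refine (Finset.abs_sum_le_sum_abs _ _).trans ?_
    have : ∀ i ∈ Finset.range k, |(∫ t in (0 : ℝ)..Real.pi, g (a i + 2 * b i * Real.cos t)) -
      ∫ t in (0 : ℝ)..Real.pi, f (a i + 2 * b i * Real.cos t)| ≤ ε * Real.pi := by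
      intro i hi
      rw [Finset.mem_range] at hi
      have hmem := point_mem (ha i hi) (hb i hi)
      have hfc : Continuous (fun t => f (a i + 2 * b i * Real.cos t)) :=
        hf.comp_continuous (by fun_prop) hmem
      have hgc : Continuous (fun t => g (a i + 2 * b i * Real.cos t)) := by fun_prop
      rw [← intervalIntegral.integral_sub (hgc.intervalIntegrable _ _)
        (hfc.intervalIntegrable _ _)]
      have := intervalIntegral.norm_integral_le_of_norm_le_const (a := 0) (b := Real.pi)
        (f := fun t => g (a i + 2 * b i * Real.cos t) - f (a i + 2 * b i * Real.cos t))
        (C := ε) (fun t _ => hε _ (hmem t))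
      rwa [sub_zero, abs_of_pos hpi] at this
    refine (Finset.sum_le_sum this).trans ?_
    simp
  rw [← mul_sub, abs_mul, abs_of_pos (by positivity : 0 < 1 / (k : ℝ)), one_div,
    inv_mul_le_iff₀ hk']
  unfold discr
  set SG := ∑ i ∈ Finset.range k, ∫ t in (0 : ℝ)..Real.pi, g (a i + 2 * b i * Real.cos t)
  set SF := ∑ i ∈ Finset.range k, ∫ t in (0 : ℝ)..Real.pi, f (a i + 2 * b i * Real.cos t)
  have e : jacobiTrace k a b f - 1 / Real.pi * SF - (jacobiTrace k a b g - 1 / Real.pi * SG) =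
    (1 / Real.pi) * (SG - SF) - (jacobiTrace k a b g - jacobiTrace k a b f) := by ring
  rw [e]
  refine (abs_sub _ _).trans ?_
  rw [abs_mul, abs_of_pos (by positivity : 0 < 1 / Real.pi)]
  have h3 : 1 / Real.pi * |SG - SF| ≤ k * ε := by
    rw [one_div, inv_mul_le_iff₀ hpi]
    linarith
  linarith

theorem discr_tendsto (a b : ℕ → ℕ → ℝ) (ha : MemS a) (hb : MemS b)
    (φ : ℝ → ℝ) (hφ : ContinuousOn φ (Set.Icc (-3 : ℝ) 3)) :
    Tendsto (fun k : ℕ => (1 / (k : ℝ)) * discr k (a k) (b k) φ) atTop (nhds 0) := by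
  rw [Metric.tendsto_atTop]
  intro ε hε
  obtain ⟨q, hq⟩ := exists_polynomial_near_of_continuousOn (-3) 3 φ hφ (ε / 4) (by positivity)
  obtain ⟨N, hN⟩ := Metric.tendsto_atTop.1 (discr_poly_tendsto a b ha hb q) (ε / 2) (by positivity)
  refine ⟨N + 1, fun k hk => ?_⟩
  have h1 := hN k (by omega)
  have h2 := discr_close k (by omega) (a k) (b k) (ha.2 k) (hb.2 k) φ (fun x => q.eval x) hφ
    q.continuous (ε / 4) (fun x hx => (hq x hx).le)
  rw [Real.dist_eq, sub_zero] at h1 ⊢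
  have h3 := abs_sub_abs_le_abs_sub ((1 / (k : ℝ)) * discr k (a k) (b k) φ)
    ((1 / (k : ℝ)) * discr k (a k) (b k) (fun x => q.eval x))
  linarith

theorem inner_continuousOn (φ : ℝ → ℝ) (hφ : ContinuousOn φ (Set.Icc (-3 : ℝ) 3)) :
    ContinuousOn (fun p : ℝ × ℝ => ∫ t in (0 : ℝ)..Real.pi, φ (p.1 + 2 * p.2 * Real.cos t))
      (Set.Icc (0 : ℝ) 1 ×ˢ Set.Icc (0 : ℝ) 1) := by
  set g := Set.IccExtend (by norm_num : (-3 : ℝ) ≤ 3) (Set.domRestrict (Set.Icc (-3 : ℝ) 3) φ)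
  have hg : Continuous g := (continuousOn_iff_continuous_domRestrict.1 hφ).Icc_extend'
  have hc : Continuous (fun p : ℝ × ℝ => ∫ t in (0 : ℝ)..Real.pi,
      g (p.1 + 2 * p.2 * Real.cos t)) := by
    apply intervalIntegral.continuous_parametric_intervalIntegral_of_continuous'
    simp only [Function.uncurry_def]
    fun_prop
  refine hc.continuousOn.congr fun p hp => ?_
  refine intervalIntegral.integral_congr fun t _ => ?_
  have := Set.IccExtend_of_mem (by norm_num : (-3 : ℝ) ≤ 3)
    (Set.domRestrict (Set.Icc (-3 : ℝ) 3) φ) (point_mem hp.1 hp.2 t)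
  exact this.symm

/-- if `r` normalizes `(a^k)ₖ, (b^k)ₖ` into `𝒮` and the normalized sequence is
`μ`-distributed on `I²`, then the trace formula holds for the normalized Jacobi matrices. -/
theorem trace_formula_regularly_varying (a b : ℕ → ℕ → ℝ) (r : ℝ → ℝ)
    (hrpos : ∀ x : ℝ, 0 < x → 0 < r x)
    (ha : MemS fun k i => a k i / r k) (hb : MemS fun k i => b k i / r k)
    (μ : Measure (ℝ × ℝ)) [IsProbabilityMeasure μ]
    (hsupp : μ ((Set.Icc (0 : ℝ) 1 ×ˢ Set.Icc (0 : ℝ) 1)ᶜ) = 0)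
    (hμ : MuDistributedI (fun k i => a k i / r k) (fun k i => b k i / r k) μ)
    (φ : ℝ → ℝ) (hφ : ContinuousOn φ (Set.Icc (-3 : ℝ) 3)) :
    Filter.Tendsto
      (fun k : ℕ =>
        (1 / (k : ℝ)) * jacobiTrace k (fun i => a k i / r k) (fun i => b k i / r k) φ)
      Filter.atTop
      (nhds ((1 / Real.pi) *
        ∫ p, (∫ t in (0 : ℝ)..Real.pi, φ (p.1 + 2 * p.2 * Real.cos t)) ∂μ)) := by
  have h1 := discr_tendsto _ _ ha hb φ hφ
  have h2 := (hμ _ (inner_continuousOn φ hφ)).const_mul (1 / Real.pi)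
  have h3 := h1.add h2
  rw [zero_add] at h3
  refine h3.congr fun k => ?_
  simp only [discr]
  ring
end
end

section
/- Let (a^k)_k and (b^k)_k be two sequences in the class 𝒮′, and suppose (a^k, b^k)_k is μ-distributed for some tight probability measure μ on ℝ². Then for every bounded continuous function φ : ℝ → ℝ, lim_{k→∞} (1/k)·Trace[φ(J(a^k,b^k))] = (1/π) ∫_{ℝ²} ∫_0^π φ(x + 2y·cos t) dt dμ(x,y). -/
open Filter MeasureTheory

noncomputable section

theorem aux_eig {k : ℕ} {A : Matrix (Fin k) (Fin k) ℝ} (hA : A.IsHermitian) (v : Fin k → ℝ)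
    (c : ℝ) :
    (∑ i, (∑ n, hA.eigenvectorBasis i n * v n) ^ 2 = ∑ n, v n ^ 2) ∧
    (∑ i, (hA.eigenvalues i - c) ^ 2 * (∑ n, hA.eigenvectorBasis i n * v n) ^ 2
      = ∑ n, ((A.mulVec v) n - c * v n) ^ 2) ∧ (∀ i, ∑ n, (hA.eigenvectorBasis i n) ^ 2 = 1) := by
  have key : ∀ w : Fin k → ℝ,
      ∑ i, (∑ n, hA.eigenvectorBasis i n * w n) ^ 2 = ∑ n, w n ^ 2 := by
    intro w
    have h := hA.eigenvectorBasis.sum_sq_inner_right (WithLp.toLp 2 w)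
    rw [EuclideanSpace.real_norm_sq_eq] at h
    rw [← h]
    refine Finset.sum_congr rfl fun i _ => ?_
    congr 1
    simp [PiLp.inner_apply, mul_comm]
  refine ⟨key v, ?_, ?_⟩
  · rw [← key]
    refine Finset.sum_congr rfl fun i _ => ?_
    rw [← mul_pow]
    congr 1
    have h1 : ∑ n, hA.eigenvectorBasis i n * (A.mulVec v n - c * v n)
        = (hA.eigenvectorBasis i : Fin k → ℝ) ⬝ᵥ (A.mulVec v)
          - c * ∑ n, hA.eigenvectorBasis i n * v n := by
      rw [Finset.mul_sum, dotProduct, ← Finset.sum_sub_distrib]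
      exact Finset.sum_congr rfl fun n _ => by ring
    have hT : A.transpose = A := by
      have := hA.eq
      rwa [Matrix.conjTranspose_eq_transpose_of_trivial] at this
    rw [h1, Matrix.dotProduct_mulVec, ← Matrix.mulVec_transpose, hT,
      hA.mulVec_eigenvectorBasis]
    simp only [dotProduct, Pi.smul_apply, smul_eq_mul]
    rw [sub_mul]
    congr 1
    rw [Finset.mul_sum]
    exact Finset.sum_congr rfl fun n _ => by ring
  · intro i
    have := hA.eigenvectorBasis.orthonormal.1 i
    rw [← EuclideanSpace.real_norm_sq_eq, this]; norm_num

theorem aux_int_cos (m n : ℕ) :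
    ∫ t in (0:ℝ)..Real.pi, Real.cos (((m:ℝ) - n) * t) = if m = n then Real.pi else 0 := by
  split_ifs with h
  · subst h; simp
  · have h' : ((m:ℝ) - n) ≠ 0 := sub_ne_zero.mpr (by exact_mod_cast h)
    rw [intervalIntegral.integral_comp_mul_left (fun x => Real.cos x) h', integral_cos]
    have : Real.sin (((m:ℝ) - n) * Real.pi) = 0 := by
      have := Real.sin_int_mul_pi ((m:ℤ) - n)
      push_cast at this
      exact this
    simp [this]

theorem aux_parseval {k : ℕ} (c : Fin k → ℝ) :
    ∫ t in (0:ℝ)..Real.pi, ((∑ n, c n * Real.cos ((n:ℕ) * t - 0)) ^ 2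
      + (∑ n, c n * Real.cos ((n:ℕ) * t - Real.pi / 2)) ^ 2) = Real.pi * ∑ n, c n ^ 2 := by
  have h : ∀ t : ℝ, ((∑ n, c n * Real.cos ((n:ℕ) * t - 0)) ^ 2
      + (∑ n, c n * Real.cos ((n:ℕ) * t - Real.pi / 2)) ^ 2)
      = ∑ m : Fin k, ∑ n : Fin k, c m * c n * Real.cos ((((m:ℕ):ℝ) - (n:ℕ)) * t) := by
    intro t
    simp only [sub_zero, Real.cos_sub_pi_div_two]
    rw [sq, sq, Finset.sum_mul_sum, Finset.sum_mul_sum, ← Finset.sum_add_distrib]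
    refine Finset.sum_congr rfl fun m _ => ?_
    rw [← Finset.sum_add_distrib]
    refine Finset.sum_congr rfl fun n _ => ?_
    rw [sub_mul, Real.cos_sub]; ring
  simp_rw [h]
  rw [intervalIntegral.integral_finsetSum]
  · rw [Finset.mul_sum]
    refine Finset.sum_congr rfl fun m _ => ?_
    rw [intervalIntegral.integral_finsetSum]
    · simp_rw [intervalIntegral.integral_const_mul, aux_int_cos]
      rw [Finset.sum_eq_single m]
      · simp; ring
      · intro n _ hn
        rw [if_neg]; · simp
        intro h'; exact hn (Fin.ext h'.symm)
      · simp
    · intro n _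
      exact (by fun_prop : Continuous _).intervalIntegrable _ _
  · intro n _
    exact (by fun_prop : Continuous _).intervalIntegrable _ _

/-- window indicator -/
def auxWin (L j n : ℕ) : ℝ := if n ≤ j ∧ j < n + L then 1 else 0

theorem auxWin_nonneg (L j n : ℕ) : 0 ≤ auxWin L j n := by
  unfold auxWin; split_ifs <;> norm_num

theorem auxWin_sum {k L n : ℕ} (hn : n < k) (F : ℕ → ℝ) :
    ∑ j ∈ Finset.range (k + L), auxWin L j n * F j = ∑ d ∈ Finset.range L, F (n + d) := by
  simp only [auxWin, ite_mul, one_mul, zero_mul]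
  rw [← Finset.sum_filter]
  have : (Finset.range (k + L)).filter (fun j => n ≤ j ∧ j < n + L) = Finset.Ico n (n + L) := by
    ext j; simp; omega
  rw [this, Finset.sum_Ico_eq_sum_range]
  simp

theorem aux_resolution {k : ℕ} (L : ℕ) (u : Fin k → ℝ) (hu : ∑ n, u n ^ 2 = 1) :
    ∫ t in (0:ℝ)..Real.pi, ∑ j ∈ Finset.range (k + L),
      ((∑ n, u n * (auxWin L j n * Real.cos ((n:ℕ) * t - 0))) ^ 2
      + (∑ n, u n * (auxWin L j n * Real.cos ((n:ℕ) * t - Real.pi / 2))) ^ 2) = Real.pi * L := by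
  rw [intervalIntegral.integral_finsetSum]
  · have := fun j : ℕ => aux_parseval (fun n : Fin k => u n * auxWin L j n)
    simp_rw [← mul_assoc, this]
    rw [← Finset.mul_sum, Finset.sum_comm]
    congr 1
    have h : ∀ n : Fin k, ∑ j ∈ Finset.range (k + L), (u n * auxWin L j n) ^ 2 = u n ^ 2 * L := by
      intro n
      have h1 := auxWin_sum (L := L) n.2 (fun _ => u n ^ 2)
      simp only [Finset.sum_const, Finset.card_range, nsmul_eq_mul] at h1
      rw [mul_comm, ← h1]
      refine Finset.sum_congr rfl fun j _ => ?_
      unfold auxWin; split_ifs <;> ring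
    simp_rw [h]
    rw [← Finset.sum_mul, hu, one_mul]
  · intro j _
    exact (by fun_prop : Continuous _).intervalIntegrable _ _

theorem aux_mulVec (k : ℕ) (a b : ℕ → ℝ) (v : ℕ → ℝ) (n : Fin k) :
    (jacobiMatrix k a b).mulVec (fun i : Fin k => v i) n
      = a n * v n + (if (n:ℕ) + 1 < k then b n * v (n + 1) else 0)
        + (if 1 ≤ (n:ℕ) then b (n - 1) * v (n - 1) else 0) := by
  have h : (jacobiMatrix k a b).mulVec (fun i : Fin k => v i) n
      = ∑ i ∈ Finset.range k, (if (n:ℕ) = i then a n else if (n:ℕ) + 1 = i then b n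
          else if i + 1 = (n:ℕ) then b i else 0) * v i := by
    rw [Finset.sum_range]
    simp [Matrix.mulVec, dotProduct, jacobiMatrix]
  have h2 : ∀ i, (if (n:ℕ) = i then a n else if (n:ℕ) + 1 = i then b n
          else if i + 1 = (n:ℕ) then b i else 0) * v i
      = (if i = (n:ℕ) then a n * v n else 0) + (if i = (n:ℕ) + 1 then b n * v (n + 1) else 0)
        + (if i = (n:ℕ) - 1 then (if 1 ≤ (n:ℕ) then b (n - 1) * v (n - 1) else 0) else 0) := by
    intro i
    obtain ⟨n, hn⟩ := n
    simp only
    rcases Nat.lt_trichotomy i n with h | h | h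
    · by_cases h' : i + 1 = n
      · subst h'
        have e1 : ¬ (i + 1 = i) := by omega
        have e2 : ¬ (i + 1 + 1 = i) := by omega
        have e3 : ¬ (i = i + 1) := by omega
        have e4 : ¬ (i = i + 1 + 1) := by omega
        simp [e2, e4]
      · have e1 : ¬ (n = i) := by omega
        have e2 : ¬ (n + 1 = i) := by omega
        have e3 : ¬ (i = n - 1) := by omega
        have e4 : ¬ (i = n + 1) := by omega
        have e5 : ¬ (i = n) := by omega
        simp [e1, e2, e3, e4, e5, h']
    · subst h
      by_cases h0 : 1 ≤ i
      · have e3 : ¬ (i = i - 1) := by omega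
        simp [e3]
      · simp [h0]
    · have e1 : ¬ (n = i) := by omega
      have e5 : ¬ (i = n) := by omega
      have e3 : ¬ (i = n - 1) := by omega
      have e6 : ¬ (i + 1 = n) := by omega
      by_cases h' : i = n + 1
      · subst h'
        simp [e3]
      · have e2 : ¬ (n + 1 = i) := by omega
        simp [e1, e2, e3, e5, e6, h']
  rw [h]
  simp_rw [h2, Finset.sum_add_distrib, Finset.sum_ite_eq', Finset.mem_range]
  rw [if_pos n.2, if_pos (show (n:ℕ) - 1 < k by omega)]

/-- edge indicator -/
def auxEdge (k L j n : ℕ) : ℝ :=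
  (if j + 1 = n then 1 else 0) + (if j = n then 1 else 0) + (if j + 1 = n + L then 1 else 0)
  + (if j = n + L then 1 else 0)
  + (if n = 0 then 1 else 0) * (if n ≤ j + 1 ∧ j ≤ n + L then 1 else 0)
  + (if n + 1 = k then 1 else 0) * (if n ≤ j + 1 ∧ j ≤ n + L then 1 else 0)

theorem auxEdge_nonneg (k L j n : ℕ) : 0 ≤ auxEdge k L j n := by
  unfold auxEdge; positivity

theorem aux_le_edge_sum (k L j n : ℕ) (h : j + 1 = n ∨ j = n ∨ j + 1 = n + L ∨ j = n + L ∨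
    ((n = 0 ∨ n + 1 = k) ∧ n ≤ j + 1 ∧ j ≤ n + L)) : 1 ≤ auxEdge k L j n := by
  have p : ∀ P : Prop, ∀ [Decidable P], (0:ℝ) ≤ if P then 1 else 0 := by
    intro P _; split_ifs <;> norm_num
  have q1 := p (j + 1 = n)
  have q2 := p (j = n)
  have q3 := p (j + 1 = n + L)
  have q4 := p (j = n + L)
  have q5 := mul_nonneg (p (n = 0)) (p (n ≤ j + 1 ∧ j ≤ n + L))
  have q6 := mul_nonneg (p (n + 1 = k)) (p (n ≤ j + 1 ∧ j ≤ n + L))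
  unfold auxEdge
  rcases h with h | h | h | h | ⟨h | h, h'⟩
  · rw [if_pos h] at *; linarith
  · rw [if_pos h] at q2 ⊢; linarith
  · rw [if_pos h] at q3 ⊢; linarith
  · rw [if_pos h] at q4 ⊢; linarith
  · rw [if_pos h, if_pos h'] at q5 ⊢; rw [if_pos h'] at q6; linarith
  · rw [if_pos h, if_pos h'] at q6 ⊢; rw [if_pos h'] at q5; linarith

/-- residual -/
def auxRes (k L : ℕ) (a b : ℕ → ℝ) (t θ : ℝ) (j n : ℕ) : ℝ :=
  a n * (auxWin L j n * Real.cos (n * t - θ))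
   + (if n + 1 < k then b n * (auxWin L j (n + 1) * Real.cos ((n + 1 : ℕ) * t - θ)) else 0)
   + (if 1 ≤ n then b (n - 1) * (auxWin L j (n - 1) * Real.cos ((n - 1 : ℕ) * t - θ)) else 0)
   - (a j + 2 * b j * Real.cos t) * (auxWin L j n * Real.cos (n * t - θ))

theorem aux_abs_mul_le {x y B : ℝ} (hx : |x| ≤ B) (hy : |y| ≤ 1) : |x * y| ≤ B := by
  rw [abs_mul]
  calc |x| * |y| ≤ |x| * 1 := by gcongr
    _ ≤ B := by simpa using hx

theorem aux_win_cos (L j n : ℕ) (x : ℝ) : |auxWin L j n * Real.cos x| ≤ 1 := by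
  refine aux_abs_mul_le ?_ (Real.abs_cos_le_one x)
  unfold auxWin; split_ifs <;> simp

theorem auxRes_le {k L : ℕ} {a b : ℕ → ℝ} {B : ℝ} (ha : ∀ n, |a n| ≤ B) (hb : ∀ n, |b n| ≤ B)
    (t θ : ℝ) (j n : ℕ) : |auxRes k L a b t θ j n| ≤ 6 * B := by
  have hB : 0 ≤ B := (abs_nonneg _).trans (ha 0)
  have h1 := aux_abs_mul_le (ha n) (aux_win_cos L j n (n * t - θ))
  have h2 : |(if n + 1 < k then b n * (auxWin L j (n + 1) * Real.cos ((n + 1 : ℕ) * t - θ))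
      else 0)| ≤ B := by
    split_ifs
    · exact aux_abs_mul_le (hb _) (aux_win_cos _ _ _ _)
    · simpa
  have h3 : |(if 1 ≤ n then b (n - 1) * (auxWin L j (n - 1) * Real.cos ((n - 1 : ℕ) * t - θ))
      else 0)| ≤ B := by
    split_ifs
    · exact aux_abs_mul_le (hb _) (aux_win_cos _ _ _ _)
    · simpa
  have h4 : |(a j + 2 * b j * Real.cos t) * (auxWin L j n * Real.cos (n * t - θ))| ≤ 3 * B := by
    refine aux_abs_mul_le ?_ (aux_win_cos _ _ _ _)
    have h5 := aux_abs_mul_le (hb j) (Real.abs_cos_le_one t)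
    have h6 := ha j
    rw [abs_le] at *
    constructor <;> linarith [h5.1, h5.2, h6.1, h6.2]
  unfold auxRes
  rw [abs_le] at *
  constructor <;> linarith [h1.1, h1.2, h2.1, h2.2, h3.1, h3.2, h4.1, h4.2]

theorem auxRes_sq_le {k L : ℕ} {a b : ℕ → ℝ} {B : ℝ} (ha : ∀ n, |a n| ≤ B) (hb : ∀ n, |b n| ≤ B)
    (t θ : ℝ) (j n : ℕ) (hn : n < k) : auxRes k L a b t θ j n ^ 2 ≤
      6 * B * (auxWin L j n * (|a n - a j| + |b n - b j| + |b (n - 1) - b j|))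
      + 36 * B ^ 2 * auxEdge k L j n := by
  have hB : 0 ≤ B := (abs_nonneg _).trans (ha 0)
  have hbd := auxRes_le (k := k) (L := L) ha hb t θ j n
  have hw := auxWin_nonneg L j n
  have he := auxEdge_nonneg k L j n
  by_cases hedge : j + 1 = n ∨ j = n ∨ j + 1 = n + L ∨ j = n + L ∨
    ((n = 0 ∨ n + 1 = k) ∧ n ≤ j + 1 ∧ j ≤ n + L)
  · have h1 := aux_le_edge_sum k L j n hedge
    have h2 : auxRes k L a b t θ j n ^ 2 ≤ 36 * B ^ 2 := by
      rw [← sq_abs]; nlinarith [abs_nonneg (auxRes k L a b t θ j n)]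
    have h3 : 0 ≤ 6 * B * (auxWin L j n * (|a n - a j| + |b n - b j| + |b (n - 1) - b j|)) := by
      positivity
    nlinarith [sq_nonneg B]
  · have h0 : 0 ≤ 36 * B ^ 2 * auxEdge k L j n := by positivity
    push Not at hedge
    by_cases hin : n ≤ j ∧ j < n + L
    · obtain ⟨e1, e2, e3, e4, e5⟩ := hedge
      have w0 : auxWin L j n = 1 := if_pos hin
      have w1 : auxWin L j (n + 1) = 1 := if_pos (by omega)
      have w2 : auxWin L j (n - 1) = 1 := if_pos (by omega)
      have i1 : n + 1 < k := by
        by_contra h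
        have := e5 (Or.inr (by omega)) (by omega)
        omega
      have i2 : 1 ≤ n := by
        by_contra h
        have := e5 (Or.inl (by omega)) (by omega)
        omega
      have hr : auxRes k L a b t θ j n = (a n - a j) * Real.cos (n * t - θ)
          + (b n - b j) * Real.cos ((n + 1 : ℕ) * t - θ)
          + (b (n - 1) - b j) * Real.cos ((n - 1 : ℕ) * t - θ) := by
        have hc : Real.cos ((n + 1 : ℕ) * t - θ) + Real.cos ((n - 1 : ℕ) * t - θ)
            = 2 * Real.cos t * Real.cos (n * t - θ) := by
          rw [Nat.cast_sub i2]; push_cast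
          rw [show ((n:ℝ) + 1) * t - θ = (n * t - θ) + t by ring,
            show ((n:ℝ) - 1) * t - θ = (n * t - θ) - t by ring, Real.cos_add, Real.cos_sub (n * t - θ) t]
          ring
        unfold auxRes
        rw [w0, w1, w2, if_pos i1, if_pos i2]
        linear_combination b j * hc
      have hr2 : |auxRes k L a b t θ j n| ≤ |a n - a j| + |b n - b j| + |b (n - 1) - b j| := by
        rw [hr]
        refine (abs_add_three _ _ _).trans ?_
        exact add_le_add (add_le_add (aux_abs_mul_le le_rfl (Real.abs_cos_le_one _))
          (aux_abs_mul_le le_rfl (Real.abs_cos_le_one _)))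
          (aux_abs_mul_le le_rfl (Real.abs_cos_le_one _))
      rw [w0, one_mul]
      rw [← sq_abs]
      nlinarith [abs_nonneg (auxRes k L a b t θ j n)]
    · obtain ⟨e1, e2, e3, e4, e5⟩ := hedge
      have w0 : auxWin L j n = 0 := if_neg hin
      have w1 : auxWin L j (n + 1) = 0 := if_neg (by omega)
      have w2 : 1 ≤ n → auxWin L j (n - 1) = 0 := fun h => if_neg (by omega)
      have hr : auxRes k L a b t θ j n = 0 := by
        unfold auxRes
        rw [w0, w1]
        split_ifs with h1 h2
        · rw [w2 h2]; ring
        · ring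
        · rw [w2 (by assumption)]; ring
        · ring
      rw [hr, w0]
      simpa using h0

theorem aux_edge_sum {k L : ℕ} :
    ∑ n ∈ Finset.range k, ∑ j ∈ Finset.range (k + L), auxEdge k L j n
      ≤ 4 * k + 2 * (L + 2) := by
  have hsingle : ∀ m : ℕ, ∀ s : Finset ℕ, ∑ j ∈ s, (if j = m then (1:ℝ) else 0) ≤ 1 := by
    intro m s; rw [Finset.sum_ite_eq']; split_ifs <;> norm_num
  have hn : ∀ n ∈ Finset.range k, ∑ j ∈ Finset.range (k + L), auxEdge k L j n
      ≤ 4 + (if n = 0 then 1 else 0) * ((L:ℝ) + 2) + (if n = k - 1 then 1 else 0) * ((L:ℝ) + 2) := by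
    intro n hn
    have hn' := Finset.mem_range.mp hn
    simp only [auxEdge, Finset.sum_add_distrib, ← Finset.mul_sum]
    have h1 : ∑ j ∈ Finset.range (k + L), (if j + 1 = n then (1:ℝ) else 0) ≤ 1 := by
      refine le_trans (Finset.sum_le_sum fun j _ => ?_) (hsingle (n - 1) (Finset.range (k + L)))
      split_ifs <;> first | omega | norm_num
    have h3 : ∑ j ∈ Finset.range (k + L), (if j + 1 = n + L then (1:ℝ) else 0) ≤ 1 := by
      refine le_trans (Finset.sum_le_sum fun j _ => ?_) (hsingle (n + L - 1) (Finset.range (k + L)))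
      split_ifs <;> first | omega | norm_num
    have h2 := hsingle n (Finset.range (k + L))
    have h4 := hsingle (n + L) (Finset.range (k + L))
    have h5 : ∑ j ∈ Finset.range (k + L), (if n ≤ j + 1 ∧ j ≤ n + L then (1:ℝ) else 0)
        ≤ (L:ℝ) + 2 := by
      rw [← Finset.sum_filter]
      simp only [Finset.sum_const, nsmul_eq_mul, mul_one]
      have : ((Finset.range (k + L)).filter (fun j => n ≤ j + 1 ∧ j ≤ n + L)).card ≤ L + 2 := by
        calc _ ≤ (Finset.Icc (n - 1) (n + L)).card := by
              apply Finset.card_le_card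
              intro j; simp only [Finset.mem_filter, Finset.mem_range, Finset.mem_Icc]; omega
          _ ≤ _ := by rw [Nat.card_Icc]; omega
      exact_mod_cast this
    have e : (if n + 1 = k then (1:ℝ) else 0) = (if n = k - 1 then 1 else 0) := by
      congr 1; simp; omega
    rw [e]
    gcongr
    linarith
  refine (Finset.sum_le_sum hn).trans ?_
  simp only [Finset.sum_add_distrib, ← Finset.sum_mul]
  have h1 := hsingle 0 (Finset.range k)
  have h2 := hsingle (k - 1) (Finset.range k)
  have : (0:ℝ) ≤ L + 2 := by positivity
  simp only [Finset.sum_const, Finset.card_range, nsmul_eq_mul]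
  nlinarith

theorem aux_tv {a : ℕ → ℝ} {T : ℝ} (hT : ∀ N, ∑ i ∈ Finset.range N, |a (i + 1) - a i| ≤ T)
    (k d : ℕ) : ∑ n ∈ Finset.range k, |a n - a (n + d)| ≤ d * T := by
  induction d with
  | zero => simp
  | succ d ih =>
    have h1 : ∑ n ∈ Finset.range k, |a (n + d) - a (n + (d + 1))| ≤ T := by
      have h2 := hT (d + k)
      rw [Finset.sum_range_add] at h2
      have h3 : 0 ≤ ∑ i ∈ Finset.range d, |a (i + 1) - a i| :=
        Finset.sum_nonneg fun _ _ => abs_nonneg _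
      refine le_trans (le_of_eq ?_) ((le_add_of_nonneg_left h3).trans h2)
      refine Finset.sum_congr rfl fun n _ => ?_
      rw [abs_sub_comm, show d + n + 1 = n + (d + 1) by ring, add_comm d n]
    calc _ ≤ ∑ n ∈ Finset.range k, (|a n - a (n + d)| + |a (n + d) - a (n + (d + 1))|) :=
          Finset.sum_le_sum fun n _ => abs_sub_le _ _ _
      _ ≤ _ := by rw [Finset.sum_add_distrib]; push_cast; linarith

theorem aux_tvL {a : ℕ → ℝ} {T : ℝ} (hT : ∀ N, ∑ i ∈ Finset.range N, |a (i + 1) - a i| ≤ T)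
    (k L : ℕ) : ∑ n ∈ Finset.range k, ∑ j ∈ Finset.range (k + L), auxWin L j n * |a n - a j|
      ≤ L ^ 2 * T := by
  have hT0 : 0 ≤ T := by simpa using hT 0
  rw [Finset.sum_congr rfl fun n hn => auxWin_sum (L := L) (Finset.mem_range.mp hn)
    (fun j => |a n - a j|), Finset.sum_comm]
  calc _ ≤ ∑ d ∈ Finset.range L, (L:ℝ) * T := by
        refine Finset.sum_le_sum fun d hd => (aux_tv hT k d).trans ?_
        have := (Finset.mem_range.mp hd).le
        gcongr
    _ = _ := by simp; ring

theorem aux_res_total {k L : ℕ} {a b : ℕ → ℝ} {B T : ℝ} (hL : 1 ≤ L)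
    (ha : ∀ n, |a n| ≤ B) (hb : ∀ n, |b n| ≤ B)
    (hTa : ∀ N, ∑ i ∈ Finset.range N, |a (i + 1) - a i| ≤ T)
    (hTb : ∀ N, ∑ i ∈ Finset.range N, |b (i + 1) - b i| ≤ T) (t θ : ℝ) :
    ∑ j ∈ Finset.range (k + L), ∑ n ∈ Finset.range k, auxRes k L a b t θ j n ^ 2
      ≤ 24 * B * L ^ 2 * T + 36 * B ^ 2 * (4 * k + 2 * (L + 2)) := by
  have hB : 0 ≤ B := (abs_nonneg _).trans (ha 0)
  have hT0 : 0 ≤ T := by simpa using hTa 0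
  rw [Finset.sum_comm]
  have h1 : ∑ n ∈ Finset.range k, ∑ j ∈ Finset.range (k + L), auxRes k L a b t θ j n ^ 2
     ≤ ∑ n ∈ Finset.range k, ∑ j ∈ Finset.range (k + L),
       (6 * B * (auxWin L j n * |a n - a j| + 2 * (auxWin L j n * |b n - b j|)
          + auxWin L j n * |b (n - 1) - b n|)
      + 36 * B ^ 2 * auxEdge k L j n) := by
    refine Finset.sum_le_sum fun n hn => Finset.sum_le_sum fun j _ => ?_
    refine (auxRes_sq_le ha hb t θ j n (Finset.mem_range.mp hn)).trans ?_
    have := abs_sub_le (b (n - 1)) (b n) (b j)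
    have hw := auxWin_nonneg L j n
    gcongr
    nlinarith
  refine h1.trans ?_
  simp only [Finset.sum_add_distrib, ← Finset.mul_sum]
  have h2 := aux_tvL hTa k L
  have h3 := aux_tvL hTb k L
  have h4 := aux_edge_sum (k := k) (L := L)
  have h5 : ∑ n ∈ Finset.range k, ∑ j ∈ Finset.range (k + L), auxWin L j n * |b (n - 1) - b n|
      ≤ L * T := by
    rw [Finset.sum_congr rfl fun n hn => auxWin_sum (L := L) (Finset.mem_range.mp hn)
      (fun j => |b (n - 1) - b n|)]
    simp only [Finset.sum_const, Finset.card_range, nsmul_eq_mul, ← Finset.mul_sum]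
    gcongr
    cases k with
    | zero => simpa
    | succ k =>
      rw [Finset.sum_range_succ']
      simp only [Nat.add_sub_cancel, Nat.zero_sub, sub_self, abs_zero, add_zero]
      refine le_trans (le_of_eq (Finset.sum_congr rfl fun n _ => ?_)) (hTb k)
      exact abs_sub_comm _ _
  have h6 : (L:ℝ) * T ≤ L ^ 2 * T := by
    have : (1:ℝ) ≤ L := by exact_mod_cast hL
    gcongr
    nlinarith
  have h7 : 36 * B ^ 2 * ∑ n ∈ Finset.range k, ∑ j ∈ Finset.range (k + L), auxEdge k L j n
     ≤ 36 * B ^ 2 * (4 * k + 2 * (L + 2)) := by gcongr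
  nlinarith

theorem auxW_le (k L j : ℕ) : ∑ n ∈ Finset.range k, auxWin L j n ≤ L := by
  simp only [auxWin]
  rw [← Finset.sum_filter]
  simp only [Finset.sum_const, nsmul_eq_mul, mul_one]
  have : ((Finset.range k).filter (fun n => n ≤ j ∧ j < n + L)).card ≤ L := by
    calc _ ≤ (Finset.Ico (j + 1 - L) (j + 1)).card := by
          apply Finset.card_le_card
          intro n; simp only [Finset.mem_filter, Finset.mem_range, Finset.mem_Ico]; omega
      _ ≤ _ := by rw [Nat.card_Ico]; omega
  exact_mod_cast this

theorem auxW_total (k L : ℕ) :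
    ∑ j ∈ Finset.range (k + L), ∑ n ∈ Finset.range k, auxWin L j n = k * L := by
  rw [Finset.sum_comm]
  rw [Finset.sum_congr rfl fun n hn => by
    simpa using auxWin_sum (L := L) (Finset.mem_range.mp hn) (fun _ => 1)]
  simp

theorem auxW_f (k L : ℕ) (F : ℕ → ℝ) {C : ℝ} (hF : ∀ j, |F j| ≤ C) :
    |∑ j ∈ Finset.range (k + L), F j * ∑ n ∈ Finset.range k, auxWin L j n
      - L * ∑ j ∈ Finset.range k, F j| ≤ 2 * C * L ^ 2 := by
  have hC : 0 ≤ C := (abs_nonneg _).trans (hF 0)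
  have htot := auxW_total k L
  set W : ℕ → ℝ := fun j => ∑ n ∈ Finset.range k, auxWin L j n with hW
  have hWL : ∀ j, W j ≤ L := auxW_le k L
  have hW0 : ∀ j, 0 ≤ W j := fun j => Finset.sum_nonneg fun n _ => auxWin_nonneg L j n
  change |∑ j ∈ Finset.range (k + L), F j * W j - L * ∑ j ∈ Finset.range k, F j| ≤ 2 * C * L ^ 2
  change ∑ j ∈ Finset.range (k + L), W j = k * L at htot
  rw [Finset.sum_range_add] at htot ⊢
  have hA : ∑ x ∈ Finset.range L, W (k + x) ≤ L ^ 2 := by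
    calc _ ≤ ∑ x ∈ Finset.range L, (L:ℝ) := Finset.sum_le_sum fun x _ => hWL _
      _ = _ := by simp; ring
  have h1 : |∑ x ∈ Finset.range L, F (k + x) * W (k + x)|
      ≤ C * ∑ x ∈ Finset.range L, W (k + x) := by
    rw [Finset.mul_sum]
    refine (Finset.abs_sum_le_sum_abs _ _).trans (Finset.sum_le_sum fun x _ => ?_)
    rw [abs_mul, abs_of_nonneg (hW0 _)]
    exact mul_le_mul_of_nonneg_right (hF _) (hW0 _)
  have h2 : |∑ j ∈ Finset.range k, F j * (W j - L)| ≤ C * ∑ j ∈ Finset.range k, (L - W j) := by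
    rw [Finset.mul_sum]
    refine (Finset.abs_sum_le_sum_abs _ _).trans (Finset.sum_le_sum fun j _ => ?_)
    rw [abs_mul, abs_sub_comm, abs_of_nonneg (sub_nonneg.mpr (hWL j))]
    exact mul_le_mul_of_nonneg_right (hF _) (sub_nonneg.mpr (hWL j))
  have h3 : ∑ j ∈ Finset.range k, F j * (W j - L)
      = ∑ j ∈ Finset.range k, F j * W j - L * ∑ j ∈ Finset.range k, F j := by
    rw [Finset.mul_sum, ← Finset.sum_sub_distrib]
    exact Finset.sum_congr rfl fun j _ => by ring
  have h4 : ∑ j ∈ Finset.range k, ((L:ℝ) - W j) = ∑ x ∈ Finset.range L, W (k + x) := by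
    rw [Finset.sum_sub_distrib]
    simp only [Finset.sum_const, Finset.card_range, nsmul_eq_mul]
    linarith
  rw [h4] at h2
  rw [h3] at h2
  calc _ = |(∑ j ∈ Finset.range k, F j * W j - L * ∑ j ∈ Finset.range k, F j)
        + ∑ x ∈ Finset.range L, F (k + x) * W (k + x)| := by congr 1; ring
    _ ≤ _ := abs_add_le _ _
    _ ≤ 2 * (C * ∑ x ∈ Finset.range L, W (k + x)) := by linarith
    _ ≤ 2 * (C * L ^ 2) := by gcongr
    _ = _ := by ring

theorem aux_core {k L : ℕ} {a b : ℕ → ℝ} {B T : ℝ} (hL : 1 ≤ L)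
    (ha : ∀ n, |a n| ≤ B) (hb : ∀ n, |b n| ≤ B)
    (hTa : ∀ N, ∑ i ∈ Finset.range N, |a (i + 1) - a i| ≤ T)
    (hTb : ∀ N, ∑ i ∈ Finset.range N, |b (i + 1) - b i| ≤ T)
    {f : ℝ → ℝ} {C K : ℝ} (hC : ∀ x, |f x| ≤ C) (hK : ∀ x y, |f x - f y| ≤ K * |x - y|)
    (hK0 : 0 ≤ K) (hfc : Continuous f) {η : ℝ} (hη : 0 < η) :
    |jacobiTrace k a b f
      - ∑ j ∈ Finset.range k,
          (1 / Real.pi) * ∫ t in (0:ℝ)..Real.pi, f (a j + 2 * b j * Real.cos t)|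
     ≤ 2 * C * L + K * (η * k
        + 2 * (24 * B * L ^ 2 * T + 36 * B ^ 2 * (4 * k + 2 * (L + 2))) / (η * L)) := by
  set R := 24 * B * L ^ 2 * T + 36 * B ^ 2 * (4 * k + 2 * (L + 2)) with hR
  set hA := jacobiMatrix_isHermitian k a b with hAdef
  set P : Fin k → ℕ → ℝ → ℝ := fun i j t =>
    (∑ n, hA.eigenvectorBasis i n * (auxWin L j n * Real.cos ((n:ℕ) * t - 0))) ^ 2
      + (∑ n, hA.eigenvectorBasis i n * (auxWin L j n * Real.cos ((n:ℕ) * t - Real.pi / 2))) ^ 2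
    with hP
  have hPc : ∀ i j, Continuous (P i j) := by intro i j; simp only [hP]; fun_prop
  have hP0 : ∀ i j t, 0 ≤ P i j t := by intro i j t; simp only [hP]; positivity
  have hPint : ∀ i, ∫ t in (0:ℝ)..Real.pi, ∑ j ∈ Finset.range (k + L), P i j t = Real.pi * L :=
    fun i => aux_resolution L _ ((aux_eig hA 0 0).2.2 i)
  have hPsum : ∀ j t, ∑ i, P i j t = ∑ n ∈ Finset.range k, auxWin L j n := by
    intro j t
    simp only [hP, Finset.sum_add_distrib]
    rw [(aux_eig hA (fun n : Fin k => auxWin L j n * Real.cos ((n:ℕ) * t - 0)) 0).1,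
      (aux_eig hA (fun n : Fin k => auxWin L j n * Real.cos ((n:ℕ) * t - Real.pi / 2)) 0).1,
      ← Finset.sum_add_distrib, Finset.sum_range]
    refine Finset.sum_congr rfl fun n _ => ?_
    rw [sub_zero, Real.cos_sub_pi_div_two]
    have := Real.sin_sq_add_cos_sq ((n:ℕ) * t)
    unfold auxWin
    split_ifs
    · linarith
    · ring
  have hres1 : ∀ j t θ, ∑ i, (hA.eigenvalues i - (a j + 2 * b j * Real.cos t)) ^ 2 *
      (∑ n, hA.eigenvectorBasis i n * (auxWin L j n * Real.cos ((n:ℕ) * t - θ))) ^ 2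
      = ∑ n ∈ Finset.range k, auxRes k L a b t θ j n ^ 2 := by
    intro j t θ
    rw [(aux_eig hA (fun n : Fin k => auxWin L j n * Real.cos ((n:ℕ) * t - θ)) _).2.1,
      Finset.sum_range]
    refine Finset.sum_congr rfl fun n _ => ?_
    congr 1
    rw [aux_mulVec k a b (fun n => auxWin L j n * Real.cos ((n:ℕ) * t - θ)) n]
    rfl
  have hres : ∀ t, ∑ j ∈ Finset.range (k + L), ∑ i,
      (hA.eigenvalues i - (a j + 2 * b j * Real.cos t)) ^ 2 * P i j t ≤ 2 * R := by
    intro t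
    simp only [hP, mul_add, Finset.sum_add_distrib, hres1]
    have h1 := aux_res_total (k := k) hL ha hb hTa hTb t 0
    have h2 := aux_res_total (k := k) hL ha hb hTa hTb t (Real.pi / 2)
    linarith
  have hpt : ∀ t, |∑ i, f (hA.eigenvalues i) * (∑ j ∈ Finset.range (k + L), P i j t)
      - L * ∑ j ∈ Finset.range k, f (a j + 2 * b j * Real.cos t)|
      ≤ 2 * C * L ^ 2 + K * (η * (k * L) + 2 * R / η) := by
    intro t
    have h1 := auxW_f k L (fun j => f (a j + 2 * b j * Real.cos t)) (fun j => hC _)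
    have h2 : |∑ i, f (hA.eigenvalues i) * (∑ j ∈ Finset.range (k + L), P i j t)
        - ∑ j ∈ Finset.range (k + L), f (a j + 2 * b j * Real.cos t) *
          ∑ n ∈ Finset.range k, auxWin L j n| ≤ K * (η * (k * L) + 2 * R / η) := by
      have e : ∑ i, f (hA.eigenvalues i) * (∑ j ∈ Finset.range (k + L), P i j t)
        - ∑ j ∈ Finset.range (k + L), f (a j + 2 * b j * Real.cos t) *
          ∑ n ∈ Finset.range k, auxWin L j n
          = ∑ j ∈ Finset.range (k + L), ∑ i,
            (f (hA.eigenvalues i) - f (a j + 2 * b j * Real.cos t)) * P i j t := by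
        simp_rw [← hPsum _ t, Finset.mul_sum]
        rw [Finset.sum_comm, ← Finset.sum_sub_distrib]
        refine Finset.sum_congr rfl fun j _ => ?_
        rw [← Finset.sum_sub_distrib]
        exact Finset.sum_congr rfl fun i _ => by ring
      rw [e]
      have hterm : ∀ j i, |(f (hA.eigenvalues i) - f (a j + 2 * b j * Real.cos t)) * P i j t|
          ≤ K * (η * P i j t
            + (hA.eigenvalues i - (a j + 2 * b j * Real.cos t)) ^ 2 * P i j t / η) := by
        intro j i
        set x := hA.eigenvalues i - (a j + 2 * b j * Real.cos t) with hx
        have q1 := hK (hA.eigenvalues i) (a j + 2 * b j * Real.cos t)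
        have q2 : |x| ≤ η + x ^ 2 / η := by
          rw [← sq_abs x]
          have : |x| * η ≤ η * η + |x| ^ 2 := by nlinarith [sq_nonneg (|x| - η), abs_nonneg x]
          have hq : η + |x| ^ 2 / η = (η * η + |x| ^ 2) / η := by field_simp
          rw [hq]
          rw [le_div_iff₀ hη]; exact this
        rw [abs_mul, abs_of_nonneg (hP0 i j t)]
        calc _ ≤ (K * (η + x ^ 2 / η)) * P i j t := by
              refine mul_le_mul_of_nonneg_right (q1.trans ?_) (hP0 i j t)
              exact mul_le_mul_of_nonneg_left q2 hK0
          _ = _ := by ring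
      calc _ ≤ ∑ j ∈ Finset.range (k + L), ∑ i, K * (η * P i j t
            + (hA.eigenvalues i - (a j + 2 * b j * Real.cos t)) ^ 2 * P i j t / η) := by
            refine (Finset.abs_sum_le_sum_abs _ _).trans (Finset.sum_le_sum fun j _ => ?_)
            exact (Finset.abs_sum_le_sum_abs _ _).trans (Finset.sum_le_sum fun i _ => hterm j i)
        _ = K * (η * (k * L) + (∑ j ∈ Finset.range (k + L), ∑ i,
              (hA.eigenvalues i - (a j + 2 * b j * Real.cos t)) ^ 2 * P i j t) / η) := by
            simp only [← Finset.mul_sum, Finset.sum_add_distrib, ← Finset.sum_div, hPsum,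
              auxW_total]
        _ ≤ _ := by
            have := hres t
            gcongr
    have := abs_sub_le (∑ i, f (hA.eigenvalues i) * (∑ j ∈ Finset.range (k + L), P i j t))
      (∑ j ∈ Finset.range (k + L), f (a j + 2 * b j * Real.cos t) *
          ∑ n ∈ Finset.range k, auxWin L j n)
      (L * ∑ j ∈ Finset.range k, f (a j + 2 * b j * Real.cos t))
    linarith
  have hIntegral : ∫ t in (0:ℝ)..Real.pi,
      (∑ i, f (hA.eigenvalues i) * (∑ j ∈ Finset.range (k + L), P i j t)
      - L * ∑ j ∈ Finset.range k, f (a j + 2 * b j * Real.cos t))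
      = Real.pi * L * (jacobiTrace k a b f - ∑ j ∈ Finset.range k,
          (1 / Real.pi) * ∫ t in (0:ℝ)..Real.pi, f (a j + 2 * b j * Real.cos t)) := by
    rw [intervalIntegral.integral_sub, intervalIntegral.integral_finsetSum,
      intervalIntegral.integral_const_mul, intervalIntegral.integral_finsetSum]
    · simp_rw [intervalIntegral.integral_const_mul, hPint]
      rw [← Finset.sum_mul, ← Finset.mul_sum]
      have : Real.pi ≠ 0 := Real.pi_ne_zero
      unfold jacobiTrace
      field_simp
    · intro j _
      exact (by fun_prop : Continuous _).intervalIntegrable _ _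
    · intro j _
      exact (by fun_prop : Continuous _).intervalIntegrable _ _
    · exact (by fun_prop : Continuous _).intervalIntegrable _ _
    · exact (by fun_prop : Continuous _).intervalIntegrable _ _
  have hfin := intervalIntegral.norm_integral_le_of_norm_le_const
    (a := (0:ℝ)) (b := Real.pi) (fun t _ => (Real.norm_eq_abs _).trans_le (hpt t))
  rw [hIntegral, Real.norm_eq_abs, abs_mul, sub_zero, abs_of_pos Real.pi_pos] at hfin
  have hLpos : (0:ℝ) < L := by exact_mod_cast hL
  rw [abs_of_pos (by positivity : 0 < Real.pi * (L:ℝ))] at hfin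
  have e2 : (2 * C * L ^ 2 + K * (η * (k * L) + 2 * R / η)) * Real.pi
    = Real.pi * L * (2 * C * L + K * (η * k + 2 * R / (η * L))) := by
    field_simp
  rw [e2] at hfin
  exact le_of_mul_le_mul_left hfin (by positivity)

theorem aux_trace_congr {k : ℕ} {a b a' b' : ℕ → ℝ} (f : ℝ → ℝ)
    (ha : ∀ i < k, a i = a' i) (hb : ∀ i < k, b i = b' i) :
    jacobiTrace k a b f = jacobiTrace k a' b' f := by
  have key : ∀ (A A' : Matrix (Fin k) (Fin k) ℝ) (hA : A.IsHermitian) (hA' : A'.IsHermitian),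
      A = A' → ∑ i, f (hA.eigenvalues i) = ∑ i, f (hA'.eigenvalues i) := by
    intro A A' hA hA' h
    subst h; rfl
  refine key _ _ _ _ ?_
  ext i j
  simp only [jacobiMatrix, Matrix.of_apply]
  rw [ha i i.2, hb i i.2, hb j j.2]

theorem aux_clip_tv (a : ℕ → ℝ) (k : ℕ) (N : ℕ) :
    ∑ i ∈ Finset.range N, |a (min (i + 1) (k - 1)) - a (min i (k - 1))|
      ≤ ∑ i ∈ Finset.range (k - 1), |a (i + 1) - a i| := by
  have h1 : ∑ i ∈ Finset.range N, |a (min (i + 1) (k - 1)) - a (min i (k - 1))|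
      = ∑ i ∈ (Finset.range N).filter (fun i => i < k - 1), |a (i + 1) - a i| := by
    rw [Finset.sum_filter]
    refine Finset.sum_congr rfl fun i _ => ?_
    split_ifs with h
    · rw [min_eq_left (by omega), min_eq_left (by omega)]
    · rw [min_eq_right (by omega), min_eq_right (by omega)]; simp
  rw [h1]
  refine Finset.sum_le_sum_of_subset_of_nonneg ?_ fun _ _ _ => abs_nonneg _
  intro i; simp

theorem aux_core' {k L : ℕ} (hk : 1 ≤ k) {a b : ℕ → ℝ} {B T : ℝ} (hL : 1 ≤ L)
    (ha : ∀ n < k, |a n| ≤ B) (hb : ∀ n < k, |b n| ≤ B)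
    (hTa : ∑ i ∈ Finset.range (k - 1), |a (i + 1) - a i| ≤ T)
    (hTb : ∑ i ∈ Finset.range (k - 1), |b (i + 1) - b i| ≤ T)
    {f : ℝ → ℝ} {C K : ℝ} (hC : ∀ x, |f x| ≤ C) (hK : ∀ x y, |f x - f y| ≤ K * |x - y|)
    (hK0 : 0 ≤ K) (hfc : Continuous f) {η : ℝ} (hη : 0 < η) :
    |jacobiTrace k a b f
      - ∑ j ∈ Finset.range k,
          (1 / Real.pi) * ∫ t in (0:ℝ)..Real.pi, f (a j + 2 * b j * Real.cos t)|
     ≤ 2 * C * L + K * (η * k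
        + 2 * (24 * B * L ^ 2 * T + 36 * B ^ 2 * (4 * k + 2 * (L + 2))) / (η * L)) := by
  have h := aux_core (k := k) (a := fun n => a (min n (k - 1))) (b := fun n => b (min n (k - 1)))
    hL (fun n => ha _ (by omega)) (fun n => hb _ (by omega))
    (fun N => (aux_clip_tv a k N).trans hTa) (fun N => (aux_clip_tv b k N).trans hTb)
    hC hK hK0 hfc hη
  rw [aux_trace_congr (a := a) (b := b) (a' := fun n => a (min n (k - 1)))
    (b' := fun n => b (min n (k - 1))) f (fun i hi => by rw [min_eq_left (by omega)])
    (fun i hi => by rw [min_eq_left (by omega)])]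
  refine le_trans (le_of_eq ?_) h
  congr 2
  refine Finset.sum_congr rfl fun j hj => ?_
  have := Finset.mem_range.mp hj
  rw [min_eq_left (by omega)]

theorem aux_G_tendsto (C K η M c : ℝ) :
    Tendsto (fun x : ℝ => 4 * C / x + K * η
      + K / η * (384 * M * c * (Real.log x / x) + 11520 * M ^ 2 * (Real.log x ^ 2 / x)))
      atTop (nhds (K * η)) := by
  have h1 : Tendsto (fun x : ℝ => 4 * C / x) atTop (nhds 0) :=
    tendsto_const_nhds.div_atTop tendsto_id
  have h2 : Tendsto (fun x : ℝ => Real.log x / x) atTop (nhds 0) := by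
    simpa using Real.tendsto_pow_log_div_mul_add_atTop 1 0 1 one_ne_zero
  have h3 : Tendsto (fun x : ℝ => Real.log x ^ 2 / x) atTop (nhds 0) := by
    simpa using Real.tendsto_pow_log_div_mul_add_atTop 1 0 2 one_ne_zero
  have := (h1.add_const (K * η)).add
    (((h2.const_mul (384 * M * c)).add (h3.const_mul (11520 * M ^ 2))).const_mul (K / η))
  simpa using this

theorem aux_arith {C K η M c x l L k : ℝ} (hC : 0 ≤ C) (hK : 0 ≤ K) (hη : 0 < η) (hM : 0 ≤ M)
    (hc : 0 ≤ c) (hx : 1 ≤ x) (hl : 0 ≤ l) (hL1 : x ≤ L) (hL2 : L ≤ 2 * x) (hLk : L ≤ k)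
    (hk : k = x ^ 4) :
    1 / k * (2 * C * L + K * (η * k
        + 2 * (24 * (M * (4 * l)) * L ^ 2 * (c * x ^ 2)
          + 36 * (M * (4 * l)) ^ 2 * (4 * k + 2 * (L + 2))) / (η * L)))
    ≤ 4 * C / x + K * η + K / η * (384 * M * c * (l / x) + 11520 * M ^ 2 * (l ^ 2 / x)) := by
  have hx0 : 0 < x := by linarith
  have hL0 : 0 < L := by linarith
  have hk0 : 0 < k := by linarith
  have e : 1 / k * (2 * C * L + K * (η * k
        + 2 * (24 * (M * (4 * l)) * L ^ 2 * (c * x ^ 2)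
          + 36 * (M * (4 * l)) ^ 2 * (4 * k + 2 * (L + 2))) / (η * L)))
      = 2 * C * (L / k) + K * η + K / η * (192 * M * c * l * (L * x ^ 2 / k)
        + 1152 * M ^ 2 * l ^ 2 * ((4 * k + 2 * (L + 2)) / (k * L))) := by
    field_simp
    ring
  rw [e]
  have h1 : L / k ≤ 2 * (1 / x) := by
    rw [mul_one_div, div_le_div_iff₀ hk0 hx0, hk]
    nlinarith [pow_pos hx0 2, pow_le_pow_right₀ hx (show 2 ≤ 4 by norm_num)]
  have h2 : L * x ^ 2 / k ≤ 2 * (1 / x) := by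
    rw [mul_one_div, div_le_div_iff₀ hk0 hx0, hk]
    nlinarith [pow_pos hx0 3]
  have h3 : (4 * k + 2 * (L + 2)) / (k * L) ≤ 10 * (1 / x) := by
    rw [mul_one_div, div_le_div_iff₀ (by positivity) hx0]
    have : 4 * k + 2 * (L + 2) ≤ 10 * k := by linarith
    nlinarith
  calc _ ≤ 2 * C * (2 * (1 / x)) + K * η + K / η * (192 * M * c * l * (2 * (1 / x))
        + 1152 * M ^ 2 * l ^ 2 * (10 * (1 / x))) := by gcongr
    _ = _ := by ring

theorem aux_lip (a b : ℕ → ℕ → ℝ) (ha : MemS' a) (hb : MemS' b)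
    (μ : Measure (ℝ × ℝ)) (hμ : MuDistributedR a b μ)
    (f : ℝ → ℝ) {C K : ℝ} (hC : ∀ x, |f x| ≤ C) (hK : ∀ x y, |f x - f y| ≤ K * |x - y|)
    (hK0 : 0 ≤ K) (hfc : Continuous f) :
    Tendsto (fun k : ℕ => (1 / (k : ℝ)) * jacobiTrace k (a k) (b k) f)
      atTop (nhds ((1 / Real.pi) *
        ∫ p, (∫ t in (0 : ℝ)..Real.pi, f (p.1 + 2 * p.2 * Real.cos t)) ∂μ)) := by
  have hC0 : 0 ≤ C := (abs_nonneg _).trans (hC 0)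
  have hlim := hμ (fun p => (1 / Real.pi) * ∫ t in (0 : ℝ)..Real.pi,
      f (p.1 + 2 * p.2 * Real.cos t)) (by
        refine continuous_const.mul ?_
        apply intervalIntegral.continuous_parametric_intervalIntegral_of_continuous'
        fun_prop) ⟨C, fun p => by
          have h := intervalIntegral.norm_integral_le_of_norm_le_const
            (a := (0:ℝ)) (b := Real.pi) (f := fun t => f (p.1 + 2 * p.2 * Real.cos t)) (C := C)
            (fun t _ => (Real.norm_eq_abs _).trans_le (hC _))
          rw [Real.norm_eq_abs, sub_zero, abs_of_pos Real.pi_pos] at h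
          rw [abs_mul, abs_of_pos (by positivity : 0 < 1 / Real.pi), one_div,
            inv_mul_le_iff₀ Real.pi_pos]
          linarith⟩
  rw [integral_const_mul] at hlim
  obtain ⟨ca, hca⟩ := (ha.1 (1/2) (by norm_num)).bound
  obtain ⟨cb, hcb⟩ := (hb.1 (1/2) (by norm_num)).bound
  obtain ⟨Ma, hMa⟩ := ha.2
  obtain ⟨Mb, hMb⟩ := hb.2
  set c := |ca| + |cb|
  set M := |Ma| + |Mb|
  have hdiff : Tendsto (fun k : ℕ => (1 / (k : ℝ)) * jacobiTrace k (a k) (b k) f -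
      (1 / (k : ℝ)) * ∑ j ∈ Finset.range k, (1 / Real.pi) * ∫ t in (0 : ℝ)..Real.pi,
      f (a k j + 2 * b k j * Real.cos t)) atTop (nhds 0) := by
    rw [Metric.tendsto_nhds]
    intro ε hε
    set η := ε / (2 * (K + 1)) with hη'
    have hη : 0 < η := by positivity
    have hKη : K * η < ε := by
      rw [hη', ← mul_div_assoc, div_lt_iff₀ (by positivity)]; nlinarith
    have hx : Tendsto (fun k : ℕ => (k:ℝ) ^ (1/4:ℝ)) atTop atTop :=
      (tendsto_rpow_atTop (by norm_num)).comp tendsto_natCast_atTop_atTop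
    have hG := ((aux_G_tendsto C K η M c).comp hx).eventually (gt_mem_nhds hKη)
    filter_upwards [hG, hca, hcb, hMa, hMb, eventually_ge_atTop 2] with k hG hca hcb hMa hMb hk
    have hk1 : (1:ℝ) ≤ k := by exact_mod_cast (by omega : 1 ≤ k)
    set x := (k:ℝ) ^ (1/4:ℝ) with hxdef
    have hx1 : 1 ≤ x := Real.one_le_rpow hk1 (by norm_num)
    have hkx : (k:ℝ) = x ^ 4 := by
      rw [hxdef, ← Real.rpow_natCast, ← Real.rpow_mul (by positivity)]; norm_num
    have hk2 : (k:ℝ) ^ (1 - 1/2:ℝ) = x ^ 2 := by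
      rw [hxdef, ← Real.rpow_natCast, ← Real.rpow_mul (by positivity)]; norm_num
    have hlog : Real.log k = 4 * Real.log x := by rw [hkx, Real.log_pow]; norm_num
    have hlx : 0 ≤ Real.log x := Real.log_nonneg hx1
    have hL1 : x ≤ (⌈x⌉₊ : ℝ) := Nat.le_ceil x
    have hL2 : (⌈x⌉₊ : ℝ) ≤ 2 * x := by
      have := Nat.ceil_lt_add_one (by linarith : 0 ≤ x); linarith
    have hLk : (⌈x⌉₊ : ℝ) ≤ k := by
      have : x ≤ k := by rw [hkx]; nlinarith [pow_le_pow_right₀ hx1 (show 1 ≤ 4 by norm_num)]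
      exact_mod_cast Nat.ceil_le.mpr this
    have hL : 1 ≤ ⌈x⌉₊ := by
      exact_mod_cast hx1.trans hL1
    rw [hk2, Real.norm_eq_abs, Real.norm_eq_abs, abs_of_nonneg (by positivity : 0 ≤ x ^ 2),
      abs_of_nonneg (Finset.sum_nonneg fun _ _ => abs_nonneg _)] at hca hcb
    rw [hlog] at hMa hMb
    have hcore := aux_core' (k := k) (L := ⌈x⌉₊) (by omega) (a := a k) (b := b k)
      (B := M * (4 * Real.log x)) (T := c * x ^ 2) hL
      (fun n hn => (hMa n hn).trans (by
        gcongr; exact (le_abs_self Ma).trans (le_add_of_nonneg_right (abs_nonneg _))))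
      (fun n hn => (hMb n hn).trans (by
        gcongr; exact (le_abs_self Mb).trans (le_add_of_nonneg_left (abs_nonneg _))))
      (hca.trans (by
        gcongr; exact (le_abs_self ca).trans (le_add_of_nonneg_right (abs_nonneg _))))
      (hcb.trans (by
        gcongr; exact (le_abs_self cb).trans (le_add_of_nonneg_left (abs_nonneg _))))
      hC hK hK0 hfc hη
    have har := aux_arith (C := C) (K := K) (η := η) (M := M) (c := c) hC0 hK0 hη
      (by positivity) (by positivity) hx1 hlx hL1 hL2 hLk hkx
    rw [Real.dist_eq, sub_zero, ← mul_sub, abs_mul, abs_of_nonneg (by positivity)]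
    refine lt_of_le_of_lt (mul_le_mul_of_nonneg_left hcore (by positivity)) (lt_of_le_of_lt har ?_)
    exact hG
  have := hdiff.add hlim
  simpa using this

/-- empirical spectral measure -/
def auxEmp (k : ℕ) (a b : ℕ → ℝ) : Measure ℝ :=
  ENNReal.ofReal (1 / (k : ℝ)) •
    ∑ i : Fin k, Measure.dirac ((jacobiMatrix_isHermitian k a b).eigenvalues i)

theorem auxEmp_prob (k : ℕ) (hk : 1 ≤ k) (a b : ℕ → ℝ) : IsProbabilityMeasure (auxEmp k a b) := by
  constructor
  have hk' : (0:ℝ) < k := by exact_mod_cast hk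
  simp only [auxEmp, Measure.smul_apply, Measure.finsetSum_apply, measure_univ, Finset.sum_const,
    Finset.card_univ, Fintype.card_fin, nsmul_eq_mul, mul_one, smul_eq_mul]
  rw [← ENNReal.ofReal_natCast, ← ENNReal.ofReal_mul (by positivity), one_div,
    inv_mul_cancel₀ hk'.ne', ENNReal.ofReal_one]

theorem auxEmp_integral (k : ℕ) (a b : ℕ → ℝ) (f : ℝ → ℝ) :
    ∫ x, f x ∂(auxEmp k a b) = (1 / (k:ℝ)) * jacobiTrace k a b f := by
  unfold auxEmp jacobiTrace
  rw [integral_smul_measure, integral_finsetSum_measure]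
  · simp_rw [integral_dirac]
    rw [ENNReal.toReal_ofReal (by positivity), smul_eq_mul]
  · intro i _
    exact integrable_dirac (by simp)

/-- limit measure -/
def auxLim (μ : Measure (ℝ × ℝ)) : Measure ℝ :=
  (μ.prod (ENNReal.ofReal (1 / Real.pi) • (volume.restrict (Set.Ioc 0 Real.pi)))).map
    (fun q : (ℝ × ℝ) × ℝ => q.1.1 + 2 * q.1.2 * Real.cos q.2)

theorem auxUnif_prob :
    IsProbabilityMeasure (ENNReal.ofReal (1 / Real.pi) •
      (volume.restrict (Set.Ioc 0 Real.pi)) : Measure ℝ) := by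
  constructor
  simp only [Measure.smul_apply, Measure.restrict_apply_univ, Real.volume_Ioc, sub_zero,
    smul_eq_mul]
  rw [← ENNReal.ofReal_mul (by positivity), one_div, inv_mul_cancel₀ Real.pi_ne_zero,
    ENNReal.ofReal_one]

theorem auxLim_prob (μ : Measure (ℝ × ℝ)) [IsProbabilityMeasure μ] :
    IsProbabilityMeasure (auxLim μ) := by
  have := auxUnif_prob
  unfold auxLim
  refine Measure.isProbabilityMeasure_map (Continuous.aemeasurable ?_)
  fun_prop

theorem auxLim_integral (μ : Measure (ℝ × ℝ)) [IsProbabilityMeasure μ] (f : ℝ → ℝ)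
    (hf : Continuous f) {C : ℝ} (hC : ∀ x, |f x| ≤ C) :
    ∫ x, f x ∂(auxLim μ) = (1 / Real.pi) *
        ∫ p, (∫ t in (0 : ℝ)..Real.pi, f (p.1 + 2 * p.2 * Real.cos t)) ∂μ := by
  have := auxUnif_prob
  unfold auxLim
  rw [integral_map (Continuous.aemeasurable (by fun_prop)) hf.aestronglyMeasurable,
    integral_prod]
  · simp_rw [integral_smul_measure]
    rw [ENNReal.toReal_ofReal (by positivity)]
    simp_rw [smul_eq_mul]
    rw [integral_const_mul]
    simp_rw [intervalIntegral.integral_of_le Real.pi_pos.le]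
  · refine Integrable.of_bound (C := C) (Continuous.aestronglyMeasurable (by fun_prop)) ?_
    exact Eventually.of_forall fun x => by rw [Real.norm_eq_abs]; exact hC _

/-- Theorem, unbounded case: if `(a^k)ₖ, (b^k)ₖ ∈ 𝒮′` and `(a^k,b^k)ₖ` is
`μ`-distributed for a tight probability measure `μ` on `ℝ²`, then for bounded continuous `φ`,
`lim (1/k)·Trace[φ(J(a^k,b^k))] = (1/π) ∫_{ℝ²} ∫_0^π φ(x+2y cos t) dt dμ(x,y)`. -/
theorem trace_formula_memS' (a b : ℕ → ℕ → ℝ) (ha : MemS' a) (hb : MemS' b)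
    (μ : Measure (ℝ × ℝ)) [IsProbabilityMeasure μ]
    (htight : TightRect μ) (hμ : MuDistributedR a b μ)
    (φ : ℝ → ℝ) (hφc : Continuous φ) (hφb : ∃ C : ℝ, ∀ x, |φ x| ≤ C) :
    Filter.Tendsto (fun k : ℕ => (1 / (k : ℝ)) * jacobiTrace k (a k) (b k) φ)
      Filter.atTop
      (nhds ((1 / Real.pi) *
        ∫ p, (∫ t in (0 : ℝ)..Real.pi, φ (p.1 + 2 * p.2 * Real.cos t)) ∂μ)) := by
  obtain ⟨C, hC⟩ := hφb
  rw [← tendsto_add_atTop_iff_nat 1]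
  let νs : ℕ → ProbabilityMeasure ℝ := fun k =>
    ⟨auxEmp (k + 1) (a (k + 1)) (b (k + 1)), auxEmp_prob _ (by omega) _ _⟩
  let ν : ProbabilityMeasure ℝ := ⟨auxLim μ, auxLim_prob μ⟩
  have hconv : Tendsto νs atTop (nhds ν) := by
    rw [tendsto_iff_forall_lipschitz_integral_tendsto]
    rintro f ⟨D, hD⟩ ⟨K, hK⟩
    have hf1 : ∀ x, |f x| ≤ |f 0| + D := by
      intro x
      have h1 := hD x 0
      rw [Real.dist_eq] at h1
      have h2 := abs_sub_abs_le_abs_sub (f x) (f 0)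
      linarith
    have hl := aux_lip a b ha hb μ hμ f hf1
      (fun x y => by simpa [Real.dist_eq] using hK.dist_le_mul x y) K.2 hK.continuous
    have e1 : ∫ x, f x ∂(ν : Measure ℝ) = _ := auxLim_integral μ f hK.continuous hf1
    have e2 : ∀ k, ∫ x, f x ∂(νs k : Measure ℝ) = _ :=
      fun k => auxEmp_integral (k + 1) (a (k + 1)) (b (k + 1)) f
    rw [e1]
    simp_rw [e2]
    exact (tendsto_add_atTop_iff_nat 1).mpr hl
  have h := (ProbabilityMeasure.tendsto_iff_forall_integral_tendsto.mp hconv)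
    (BoundedContinuousFunction.ofNormedAddCommGroup φ hφc C
      (fun x => by rw [Real.norm_eq_abs]; exact hC x))
  have e1 : ∫ x, φ x ∂(ν : Measure ℝ) = _ := auxLim_integral μ φ hφc hC
  have e2 : ∀ k, ∫ x, φ x ∂(νs k : Measure ℝ) = _ :=
    fun k => auxEmp_integral (k + 1) (a (k + 1)) (b (k + 1)) φ
  simp only [BoundedContinuousFunction.coe_ofNormedAddCommGroup] at h
  rw [e1] at h
  simp_rw [e2] at h
  exact h
end
end
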